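/- arXiv:1302.3695 — 4 statements merged into one kernel-verified Lean document; each statement's English description precedes it below -/
import Mathlib

section
/- Let a, b > 0, let φ(t) = (t+a)^μ f₁(t+a) = (b-t)^ν f₂(b-t) on [-a, b] with Re μ > -1, Re ν > -1, f₁(0), f₂(0) finite and nonzero, and f₁', f₂' bounded near 0, and let F(z) = ∫_{-a}^{b} φ(t) e^{zt} dt. Then as n → ∞, F(nz) = f₁(0) Γ(μ+1) (-nz)^{-μ-1} e^{-anz}(1 + O(1/n)) uniformly for z in a compact subset of {Re z < 0}. -/
open MeasureTheory intervalIntegral Complex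

lemma aux_exp_le (q δ x : ℝ) (hq : 0 < q) (hδ : 0 < δ) (hx : 0 < x) :
    Real.exp (-(x * δ)) ≤ (q / δ) ^ q * x ^ (-q) := by
  have hy : 0 < x * δ / q := by positivity
  have h1 : q * Real.log (x * δ / q) ≤ x * δ := by
    have h := Real.log_le_sub_one_of_pos hy
    calc q * Real.log (x * δ / q) ≤ q * (x * δ / q - 1) := by gcongr
      _ = x * δ - q := by field_simp
      _ ≤ x * δ := by linarith
  have h2 : (q / δ) ^ q * x ^ (-q) = (x * δ / q) ^ (-q) := by
    have e : x * δ / q = (q / δ)⁻¹ * x := by field_simp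
    rw [e, Real.mul_rpow (by positivity) hx.le, Real.inv_rpow (by positivity),
      Real.rpow_neg (x := q / δ) (by positivity) q, inv_inv]
  rw [h2, Real.rpow_def_of_pos hy]
  apply Real.exp_le_exp.mpr
  linarith

lemma aux_rint (x σ : ℝ) (hx : 0 < x) (hσ : -1 < σ) :
    IntegrableOn (fun s : ℝ => s ^ σ * Real.exp (-(x * s))) (Set.Ioi 0) := by
  have := integrableOn_rpow_mul_exp_neg_mul_rpow (s := σ) (p := 1) (b := x) hσ one_pos hx
  simpa using this

lemma aux_meas (μ r : ℂ) :
    AEStronglyMeasurable (fun s : ℝ => (s : ℂ) ^ μ * Complex.exp (-(r * s)))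
      (volume.restrict (Set.Ioi 0)) := by
  apply ContinuousOn.aestronglyMeasurable _ measurableSet_Ioi
  apply ContinuousOn.mul
  · intro s hs
    apply ContinuousAt.continuousWithinAt
    exact Complex.continuousAt_ofReal_cpow_const _ _ (Or.inr (ne_of_gt hs))
  · fun_prop

lemma aux_norm (μ r : ℂ) (s : ℝ) (hs : 0 < s) :
    ‖(s : ℂ) ^ μ * Complex.exp (-(r * s))‖ = s ^ μ.re * Real.exp (-(r.re * s)) := by
  rw [norm_mul, Complex.norm_cpow_eq_rpow_re_of_pos hs, Complex.norm_exp]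
  simp

lemma aux_cint (μ r : ℂ) (hμ : -1 < μ.re) (hr : 0 < r.re) :
    IntegrableOn (fun s : ℝ => (s : ℂ) ^ μ * Complex.exp (-(r * s))) (Set.Ioi 0) := by
  refine Integrable.mono' (aux_rint r.re μ.re hr hμ) (aux_meas μ r) ?_
  filter_upwards [ae_restrict_mem measurableSet_Ioi] with s hs
  exact (aux_norm μ r s hs).le

lemma aux_gamma (μ r : ℂ) (hμ : -1 < μ.re) (hr : 0 < r.re) :
    ∫ s in Set.Ioi (0 : ℝ), (s : ℂ) ^ μ * Complex.exp (-(r * s)) =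
      r ^ (-μ - 1) * Complex.Gamma (μ + 1) := by
  set U : Set ℂ := {z | 0 < z.re} with hU
  have hUo : IsOpen U := isOpen_lt continuous_const Complex.continuous_re
  have hUc : IsPreconnected U := (convex_halfSpace_re_gt 0).isPreconnected
  set J : ℂ → ℂ := fun r => ∫ s in Set.Ioi (0 : ℝ), (s : ℂ) ^ μ * Complex.exp (-(r * s)) with hJ
  set g : ℂ → ℂ := fun r => r ^ (-μ - 1) * Complex.Gamma (μ + 1) with hg
  have hJd : DifferentiableOn ℂ J U := by
    intro r₀ hr₀
    have hr₀' : 0 < r₀.re := hr₀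
    apply DifferentiableAt.differentiableWithinAt
    have hε : 0 < r₀.re / 2 := by linarith
    have key := hasDerivAt_integral_of_dominated_loc_of_deriv_le
      (μ := volume.restrict (Set.Ioi (0:ℝ))) (𝕜 := ℂ)
      (F := fun (r : ℂ) (s : ℝ) => (s : ℂ) ^ μ * Complex.exp (-(r * s)))
      (F' := fun (r : ℂ) (s : ℝ) => -(s : ℂ) * ((s : ℂ) ^ μ * Complex.exp (-(r * s))))
      (x₀ := r₀) (s := Metric.ball r₀ (r₀.re / 2))
      (bound := fun s : ℝ => s ^ (μ.re + 1) * Real.exp (-(r₀.re / 2 * s)))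
      (Metric.ball_mem_nhds _ hε)
      (Filter.Eventually.of_forall fun r => aux_meas μ r)
      (aux_cint μ r₀ hμ hr₀')
      ((by fun_prop : AEStronglyMeasurable (fun s : ℝ => -(s : ℂ)) _).mul (aux_meas μ r₀))
      ?_ (aux_rint _ _ hε (by linarith)) ?_
    · exact key.2.differentiableAt
    · filter_upwards [ae_restrict_mem measurableSet_Ioi] with s hs r hrb
      have hs' : 0 < s := hs
      rw [norm_mul, aux_norm μ r s hs, norm_neg, Complex.norm_real, Real.norm_of_nonneg hs'.le,
        Real.rpow_add_one hs'.ne']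
      have h1 : r₀.re / 2 ≤ r.re := by
        have h2 := Complex.abs_re_le_norm (r - r₀)
        rw [Metric.mem_ball, dist_eq_norm] at hrb
        rw [Complex.sub_re] at h2
        have := neg_abs_le (r.re - r₀.re)
        linarith
      have h3 : Real.exp (-(r.re * s)) ≤ Real.exp (-(r₀.re / 2 * s)) := by
        apply Real.exp_le_exp.mpr
        nlinarith
      have h4 : 0 ≤ s * s ^ μ.re := by positivity
      have := mul_le_mul_of_nonneg_left h3 h4
      linarith
    · filter_upwards with s r _
      have h : HasDerivAt (fun r : ℂ => -(r * (s : ℂ))) (-(s : ℂ)) r := by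
        have h0 := ((hasDerivAt_id r).mul_const (s : ℂ)).neg
        rw [one_mul] at h0
        exact h0
      have h2 := h.cexp.const_mul ((s : ℂ) ^ μ)
      have e : -(s : ℂ) * ((s : ℂ) ^ μ * Complex.exp (-(r * s))) =
          (s : ℂ) ^ μ * (Complex.exp (-(r * s)) * -(s : ℂ)) := by ring
      rw [e]
      exact h2
  have hgd : DifferentiableOn ℂ g U := by
    intro r hr
    have : r ∈ Complex.slitPlane := Or.inl hr
    apply DifferentiableAt.differentiableWithinAt
    exact ((differentiableAt_id).cpow_const this).mul_const _
  have hpos : ∀ x : ℝ, 0 < x → J x = g x := by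
    intro x hx
    have h := Complex.integral_cpow_mul_exp_neg_mul_Ioi (a := μ + 1) (r := x)
      (by simp; linarith) hx
    simp only [add_sub_cancel_right] at h
    simp only [hJ, hg]
    rw [h, one_div, Complex.inv_cpow, ← Complex.cpow_neg]
    · congr 2; ring
    · rw [Complex.arg_ofReal_of_nonneg hx.le]; exact Real.pi_pos.ne
  have hEq : Set.EqOn J g U := by
    refine (hJd.analyticOnNhd hUo).eqOn_of_preconnected_of_mem_closure (hgd.analyticOnNhd hUo) hUc
      (z₀ := 1) (by simp [hU]) ?_
    rw [Metric.mem_closure_iff]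
    intro ε hε
    refine ⟨((1 + ε / 2 : ℝ) : ℂ), ⟨hpos _ (by positivity), ?_⟩, ?_⟩
    · simp only [Set.mem_singleton_iff]
      intro h
      have h' : (1 + ε / 2 : ℝ) = 1 := by exact_mod_cast h
      linarith
    · rw [dist_eq_norm]
      have : (1 : ℂ) - ((1 + ε / 2 : ℝ) : ℂ) = ((-(ε / 2) : ℝ) : ℂ) := by push_cast; ring
      rw [this, Complex.norm_real, norm_neg, Real.norm_of_nonneg (by positivity)]
      linarith
  exact hEq hr

lemma aux_core (G : ℝ → ℂ) (L δ M : ℝ) (c0 μ : ℂ) (hμ : -1 < μ.re)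
    (hG : IntegrableOn G (Set.Ioc 0 L)) (hδ : 0 < δ) (hδL : δ ≤ L) (hM : 0 ≤ M)
    (hb : ∀ s ∈ Set.Ioc 0 δ, ‖G s - c0 * (s : ℂ) ^ μ‖ ≤ M * s ^ (μ.re + 1))
    (w : ℂ) (hw : w.re < 0) :
    ‖(∫ s in Set.Ioc 0 L, G s * Complex.exp (w * s)) -
        c0 * Complex.Gamma (μ + 1) * (-w) ^ (-μ - 1)‖ ≤
      ((M + ‖c0‖ / δ) * Real.Gamma (μ.re + 2) +
        (∫ s in Set.Ioc 0 L, ‖G s‖) * ((μ.re + 2) / δ) ^ (μ.re + 2)) *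
        (-w.re) ^ (-(μ.re + 2)) := by
  have hx : 0 < -w.re := by linarith
  set x := -w.re with hxdef
  have hnexp : ∀ s : ℝ, ‖Complex.exp (w * s)‖ = Real.exp (-(x * s)) := by
    intro s
    rw [Complex.norm_exp]
    simp [hxdef]
  -- Gamma integral
  have hgam : ∫ s in Set.Ioi (0 : ℝ), c0 * ((s : ℂ) ^ μ * Complex.exp (w * s)) =
      c0 * Complex.Gamma (μ + 1) * (-w) ^ (-μ - 1) := by
    have h := aux_gamma μ (-w) hμ (by simpa using hw)
    rw [MeasureTheory.integral_const_mul]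
    simp only [neg_mul, neg_neg] at h
    rw [h]; ring
  have hrint : ∀ σ : ℝ, -1 < σ →
      IntegrableOn (fun s : ℝ => s ^ σ * Real.exp (-(x * s))) (Set.Ioi 0) := by
    intro σ hσ
    have := integrableOn_rpow_mul_exp_neg_mul_rpow (s := σ) (p := 1) (b := x) hσ one_pos hx
    simpa using this
  have hP : IntegrableOn (fun s : ℝ => c0 * ((s : ℂ) ^ μ * Complex.exp (w * s))) (Set.Ioi 0) := by
    apply Integrable.const_mul
    refine Integrable.mono' (hrint μ.re hμ) ?_ ?_
    · apply ContinuousOn.aestronglyMeasurable _ measurableSet_Ioi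
      apply ContinuousOn.mul
      · intro s hs
        apply ContinuousAt.continuousWithinAt
        exact Complex.continuousAt_ofReal_cpow_const _ _ (Or.inr (ne_of_gt hs))
      · fun_prop
    · filter_upwards [ae_restrict_mem measurableSet_Ioi] with s hs
      rw [norm_mul, hnexp, Complex.norm_cpow_eq_rpow_re_of_pos hs]
  have hGe : IntegrableOn (fun s : ℝ => G s * Complex.exp (w * s)) (Set.Ioc 0 L) := by
    refine Integrable.mono hG ?_ ?_
    · exact hG.aestronglyMeasurable.mul (by fun_prop)
    · filter_upwards [ae_restrict_mem measurableSet_Ioc] with s hs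
      rw [norm_mul, hnexp]
      have : Real.exp (-(x * s)) ≤ 1 := by
        apply Real.exp_le_one_iff.mpr
        have := mul_pos hx hs.1
        linarith
      exact mul_le_of_le_one_right (norm_nonneg _) this
  set H : ℝ → ℂ := (Set.Ioc 0 L).indicator (fun s : ℝ => G s * Complex.exp (w * s)) with hH
  have hHint : Integrable H := (integrable_indicator_iff measurableSet_Ioc).mpr hGe
  have hHeq : ∫ s in Set.Ioi (0:ℝ), H s = ∫ s in Set.Ioc 0 L, G s * Complex.exp (w * s) := by
    rw [hH, setIntegral_indicator measurableSet_Ioc]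
    congr 2
    ext s; simp
  set N : ℝ → ℝ := (Set.Ioc 0 L).indicator (fun s : ℝ => ‖G s‖ ) with hN
  have hNint : Integrable N := (integrable_indicator_iff measurableSet_Ioc).mpr hG.norm
  have hNeq : ∫ s in Set.Ioi (0:ℝ), N s = ∫ s in Set.Ioc 0 L, ‖G s‖ := by
    rw [hN, setIntegral_indicator measurableSet_Ioc]
    congr 2
    ext s; simp
  have hN0 : ∀ s, 0 ≤ N s := fun s => Set.indicator_nonneg (fun _ _ => norm_nonneg _) s
  have hA0 : 0 ≤ ∫ s in Set.Ioc 0 L, ‖G s‖ := integral_nonneg (fun _ => norm_nonneg _)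
  have hσ : -1 < μ.re + 1 := by linarith
  have hbint := (hrint (μ.re + 1) hσ).const_mul (M + ‖c0‖ / δ)
  have hbd : ∀ s ∈ Set.Ioi (0:ℝ), ‖H s - c0 * ((s : ℂ) ^ μ * Complex.exp (w * s))‖ ≤
      (M + ‖c0‖ / δ) * (s ^ (μ.re + 1) * Real.exp (-(x * s))) + Real.exp (-(x * δ)) * N s := by
    intro s hs
    have hs' : 0 < s := hs
    have hcn : ‖(s : ℂ) ^ μ‖ = s ^ μ.re := Complex.norm_cpow_eq_rpow_re_of_pos hs' _
    by_cases hsδ : s ≤ δ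
    · have hsL : s ∈ Set.Ioc 0 L := ⟨hs', hsδ.trans hδL⟩
      have e : H s - c0 * ((s : ℂ) ^ μ * Complex.exp (w * s)) =
          (G s - c0 * (s : ℂ) ^ μ) * Complex.exp (w * s) := by
        rw [hH, Set.indicator_of_mem hsL]; ring
      rw [e, norm_mul, hnexp]
      have h1 := hb s ⟨hs', hsδ⟩
      have h2 : 0 ≤ Real.exp (-(x * δ)) * N s := mul_nonneg (Real.exp_pos _).le (hN0 s)
      have h3 : 0 ≤ ‖c0‖ / δ * (s ^ (μ.re + 1) * Real.exp (-(x * s))) := by positivity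
      have h4 := mul_le_mul_of_nonneg_right h1 (Real.exp_pos (-(x * s))).le
      nlinarith
    · push Not at hsδ
      have hHs : ‖H s‖ ≤ Real.exp (-(x * δ)) * N s := by
        by_cases hsL : s ∈ Set.Ioc 0 L
        · rw [hH, hN, Set.indicator_of_mem hsL, Set.indicator_of_mem hsL, norm_mul, hnexp, mul_comm]
          gcongr
        · rw [hH, hN, Set.indicator_of_notMem hsL, Set.indicator_of_notMem hsL]; simp
      have h5 : ‖c0 * ((s : ℂ) ^ μ * Complex.exp (w * s))‖ ≤
          ‖c0‖ / δ * (s ^ (μ.re + 1) * Real.exp (-(x * s))) := by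
        rw [norm_mul, norm_mul, hnexp, hcn, Real.rpow_add_one hs'.ne']
        have : 1 ≤ s / δ := (one_le_div hδ).mpr hsδ.le
        have h6 : 0 ≤ ‖c0‖ * (s ^ μ.re * Real.exp (-(x * s))) := by positivity
        calc _ ≤ ‖c0‖ * (s ^ μ.re * Real.exp (-(x * s))) * (s / δ) :=
              le_mul_of_one_le_right h6 this
          _ = _ := by ring
      have h7 : 0 ≤ M * (s ^ (μ.re + 1) * Real.exp (-(x * s))) := by positivity
      have := norm_sub_le (H s) (c0 * ((s : ℂ) ^ μ * Complex.exp (w * s)))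
      linarith
  have hgr : ∫ s in Set.Ioi (0:ℝ), s ^ (μ.re + 1) * Real.exp (-(x * s)) =
      x ^ (-(μ.re + 2)) * Real.Gamma (μ.re + 2) := by
    have h := Real.integral_rpow_mul_exp_neg_mul_Ioi (a := μ.re + 2) (r := x) (by linarith) hx
    rw [one_div, Real.inv_rpow hx.le, ← Real.rpow_neg hx.le] at h
    rw [← h]
    congr 1; ext s; congr 2; ring
  rw [← hgam, ← hHeq, ← integral_sub hHint.integrableOn hP]
  calc _ ≤ ∫ s in Set.Ioi (0:ℝ), ((M + ‖c0‖ / δ) * (s ^ (μ.re + 1) * Real.exp (-(x * s))) +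
            Real.exp (-(x * δ)) * N s) := by
        apply MeasureTheory.norm_integral_le_of_norm_le
        · exact hbint.add (hNint.integrableOn.const_mul _)
        · filter_upwards [ae_restrict_mem measurableSet_Ioi] with s hs using hbd s hs
    _ = (M + ‖c0‖ / δ) * (x ^ (-(μ.re + 2)) * Real.Gamma (μ.re + 2)) +
          Real.exp (-(x * δ)) * ∫ s in Set.Ioc 0 L, ‖G s‖ := by
        rw [integral_add hbint (hNint.integrableOn.const_mul _), MeasureTheory.integral_const_mul,
          MeasureTheory.integral_const_mul, hgr, hNeq]
    _ ≤ (M + ‖c0‖ / δ) * (x ^ (-(μ.re + 2)) * Real.Gamma (μ.re + 2)) +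
          (((μ.re + 2) / δ) ^ (μ.re + 2) * x ^ (-(μ.re + 2))) * ∫ s in Set.Ioc 0 L, ‖G s‖ := by
        gcongr
        exact aux_exp_le _ _ _ (by linarith) hδ hx
    _ = _ := by ring

lemma aux_compact (K : Set ℂ) (hK : IsCompact K) (hKleft : K ⊆ {z : ℂ | z.re < 0}) :
    ∃ c > (0:ℝ), ∃ B > (0:ℝ), ∀ z ∈ K, c ≤ -z.re ∧ ‖z‖ ≤ B := by
  obtain ⟨B, hB⟩ := hK.isBounded.exists_norm_le
  rcases K.eq_empty_or_nonempty with rfl | hne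
  · exact ⟨1, one_pos, 1, one_pos, by simp⟩
  · obtain ⟨z0, hz0, hmin⟩ := hK.exists_isMinOn hne (f := fun z : ℂ => -z.re) (by fun_prop)
    have := hKleft hz0
    simp only [Set.mem_ofPred_eq] at this
    exact ⟨-z0.re, by linarith, max B 1, by positivity,
      fun z hz => ⟨hmin hz, (hB z hz).trans (le_max_left _ _)⟩⟩

lemma aux_cpow_lower (w μ : ℂ) (hw : w ≠ 0) :
    Real.exp (-(Real.pi * |μ.im|)) * ‖w‖ ^ (-(μ.re + 1)) ≤ ‖w ^ (-μ - 1)‖ := by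
  rw [Complex.norm_cpow_of_ne_zero hw]
  have e : (-μ - 1).re = -(μ.re + 1) := by simp; ring
  rw [e, mul_comm, div_eq_mul_inv, ← Real.exp_neg]
  refine mul_le_mul_of_nonneg_left (Real.exp_le_exp.mpr ?_)
    (Real.rpow_nonneg (norm_nonneg _) _)
  have h : |w.arg * μ.im| ≤ Real.pi * |μ.im| := by
    rw [abs_mul]; gcongr; exact Complex.abs_arg_le_pi w
  have := neg_abs_le (w.arg * μ.im)
  simp
  linarith



/-- Asymptotics of `F(nz)` for `Re z < 0`:
`F(nz) = f₁(0) Γ(μ+1) (-nz)^{-μ-1} e^{-anz} (1 + O(1/n))`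
uniformly on compact subsets of the left half-plane. -/
theorem F_asymptotics_left_halfplane
    (a b : ℝ) (ha : 0 < a) (hb : 0 < b)
    (μ ν : ℂ) (hμ : -1 < μ.re) (hν : -1 < ν.re)
    (φ f₁ f₂ : ℝ → ℂ)
    (hint : IntervalIntegrable φ volume (-a) b)
    (hφ₁ : ∀ t ∈ Set.Icc (-a) b, φ t = ((t + a : ℝ) : ℂ) ^ μ * f₁ (t + a))
    (hφ₂ : ∀ t ∈ Set.Icc (-a) b, φ t = ((b - t : ℝ) : ℂ) ^ ν * f₂ (b - t))
    (hf₁0 : f₁ 0 ≠ 0) (hf₂0 : f₂ 0 ≠ 0)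
    (hf₁ : ∃ δ > (0 : ℝ), (∀ t ∈ Set.Icc (0 : ℝ) δ, DifferentiableAt ℝ f₁ t) ∧
          ∃ M : ℝ, ∀ t ∈ Set.Icc (0 : ℝ) δ, ‖deriv f₁ t‖ ≤ M)
    (hf₂ : ∃ δ > (0 : ℝ), (∀ t ∈ Set.Icc (0 : ℝ) δ, DifferentiableAt ℝ f₂ t) ∧
          ∃ M : ℝ, ∀ t ∈ Set.Icc (0 : ℝ) δ, ‖deriv f₂ t‖ ≤ M)
    (F : ℂ → ℂ) (hF : ∀ z : ℂ, F z = ∫ t in (-a)..b, φ t * Complex.exp (z * t))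
    (K : Set ℂ) (hK : IsCompact K) (hKleft : K ⊆ {z : ℂ | z.re < 0}) :
    ∃ C : ℝ, ∃ N : ℕ, ∀ n ≥ N, ∀ z ∈ K,
      ‖F ((n : ℂ) * z) -
          f₁ 0 * Complex.Gamma (μ + 1) * (-(n : ℂ) * z) ^ (-μ - 1) *
            Complex.exp (-(a : ℂ) * n * z)‖
        ≤ (C / n) *
          ‖f₁ 0 * Complex.Gamma (μ + 1) * (-(n : ℂ) * z) ^ (-μ - 1) *
            Complex.exp (-(a : ℂ) * n * z)‖ := by
  obtain ⟨δ₀, hδ₀, hdiff, M₀, hM₀⟩ := hf₁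
  obtain ⟨c, hc, B, hB, hcB⟩ := aux_compact K hK hKleft
  set L := a + b with hL
  have hLpos : 0 < L := by positivity
  set δ := min δ₀ L with hδdef
  have hδ : 0 < δ := lt_min hδ₀ hLpos
  have hM0 : 0 ≤ M₀ := (norm_nonneg _).trans (hM₀ 0 ⟨le_rfl, hδ₀.le⟩)
  set G : ℝ → ℂ := fun s => φ (s - a) with hGdef
  have hGint : IntegrableOn G (Set.Ioc 0 L) := by
    have h := hint.comp_sub_right a
    rw [neg_add_cancel, add_comm b a] at h
    exact (intervalIntegrable_iff_integrableOn_Ioc_of_le hLpos.le).mp h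
  have hb' : ∀ s ∈ Set.Ioc 0 δ, ‖G s - f₁ 0 * (s : ℂ) ^ μ‖ ≤ M₀ * s ^ (μ.re + 1) := by
    intro s hs
    have hs0 := hs.1
    have hsδ : s ≤ δ₀ := hs.2.trans (min_le_left _ _)
    have hsL : s ≤ L := hs.2.trans (min_le_right _ _)
    have h1 := hφ₁ (s - a) ⟨by linarith, by linarith⟩
    rw [sub_add_cancel] at h1
    have h2 : ‖f₁ s - f₁ 0‖ ≤ M₀ * ‖s - 0‖ :=
      (convex_Icc (0:ℝ) δ₀).norm_image_sub_le_of_norm_deriv_le hdiff hM₀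
        ⟨le_rfl, hδ₀.le⟩ ⟨hs0.le, hsδ⟩
    rw [sub_zero, Real.norm_of_nonneg hs0.le] at h2
    have e : G s - f₁ 0 * (s : ℂ) ^ μ = (s : ℂ) ^ μ * (f₁ s - f₁ 0) := by
      simp only [hGdef, h1]; ring
    rw [e, norm_mul, Complex.norm_cpow_eq_rpow_re_of_pos hs0, Real.rpow_add_one hs0.ne']
    calc _ ≤ s ^ μ.re * (M₀ * s) := by gcongr
      _ = _ := by ring
  have hFw : ∀ w : ℂ, F w = Complex.exp (-(a : ℂ) * w) *
      ∫ s in Set.Ioc 0 L, G s * Complex.exp (w * s) := by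
    intro w
    rw [hF, ← intervalIntegral.integral_of_le hLpos.le, ← intervalIntegral.integral_const_mul]
    have h := intervalIntegral.integral_comp_sub_right (a := 0) (b := L)
      (fun t : ℝ => φ t * Complex.exp (w * t)) a
    rw [zero_sub, hL, add_sub_cancel_left] at h
    rw [← h]
    congr 1; ext s
    simp only [hGdef]
    rw [mul_left_comm, ← Complex.exp_add]
    congr 2
    push_cast; ring
  set q := μ.re + 2 with hq
  have hqpos : 0 < q := by linarith
  set C1 := (M₀ + ‖f₁ 0‖ / δ) * Real.Gamma q + (∫ s in Set.Ioc 0 L, ‖G s‖) * (q / δ) ^ q with hC1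
  have hC10 : 0 ≤ C1 := by
    have := Real.Gamma_pos_of_pos hqpos
    have : 0 ≤ ∫ s in Set.Ioc 0 L, ‖G s‖ := integral_nonneg (fun _ => norm_nonneg _)
    positivity
  have hGam : 0 < ‖f₁ 0 * Complex.Gamma (μ + 1)‖ := by
    rw [norm_pos_iff]
    apply mul_ne_zero hf₁0
    apply Complex.Gamma_ne_zero_of_re_pos
    simp; linarith
  set D := ‖f₁ 0 * Complex.Gamma (μ + 1)‖ * (Real.exp (-(Real.pi * |μ.im|)) * B ^ (-(μ.re + 1)))
    with hD
  have hDpos : 0 < D := by positivity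
  refine ⟨C1 * c ^ (-q) / D, 1, ?_⟩
  intro n hn z hz
  have hn' : (0:ℝ) < n := by exact_mod_cast hn
  obtain ⟨hcz, hBz⟩ := hcB z hz
  have hwre : ((n : ℂ) * z).re = n * z.re := by simp
  have hwneg : ((n : ℂ) * z).re < 0 := by rw [hwre]; nlinarith
  have hcore := aux_core G L δ M₀ (f₁ 0) μ hμ hGint hδ (min_le_right _ _) hM0 hb' (n * z) hwneg
  rw [← hq, ← hC1] at hcore
  have hup : (-((n : ℂ) * z).re) ^ (-q) ≤ (n : ℝ) ^ (-q) * c ^ (-q) := by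
    rw [← Real.mul_rpow hn'.le hc.le]
    apply Real.rpow_le_rpow_of_nonpos (by positivity) _ (by linarith)
    rw [hwre]; nlinarith
  have hwne : -((n : ℂ) * z) ≠ 0 := by
    intro h; rw [neg_eq_zero] at h; rw [h] at hwneg; simp at hwneg
  have hlow : D * (n : ℝ) ^ (-(μ.re + 1)) ≤
      ‖f₁ 0 * Complex.Gamma (μ + 1) * (-((n : ℂ) * z)) ^ (-μ - 1)‖ := by
    rw [norm_mul _ ((-((n : ℂ) * z)) ^ (-μ - 1)), hD, mul_assoc]
    apply mul_le_mul_of_nonneg_left _ hGam.le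
    refine le_trans ?_ (aux_cpow_lower _ μ hwne)
    rw [mul_assoc]
    apply mul_le_mul_of_nonneg_left _ (Real.exp_pos _).le
    rw [← Real.mul_rpow hB.le hn'.le]
    apply Real.rpow_le_rpow_of_nonpos (norm_pos_iff.mpr hwne) _ (by linarith)
    rw [norm_neg, norm_mul, Complex.norm_natCast, mul_comm]
    gcongr
  have e1 : -(n : ℂ) * z = -((n : ℂ) * z) := by ring
  have e2 : -(a : ℂ) * n * z = -(a : ℂ) * (n * z) := by ring
  rw [e1, e2, hFw]
  set E := Complex.exp (-(a : ℂ) * (n * z))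
  set P := f₁ 0 * Complex.Gamma (μ + 1) * (-((n : ℂ) * z)) ^ (-μ - 1)
  rw [mul_comm E, ← sub_mul, norm_mul, norm_mul P E, ← mul_assoc]
  apply mul_le_mul_of_nonneg_right _ (norm_nonneg _)
  calc _ ≤ C1 * (-((n : ℂ) * z).re) ^ (-q) := hcore
    _ ≤ C1 * ((n : ℝ) ^ (-q) * c ^ (-q)) := by gcongr
    _ = C1 * c ^ (-q) / D / n * (D * (n : ℝ) ^ (-(μ.re + 1))) := by
        have : (n : ℝ) ^ (-q) = (n : ℝ) ^ (-(μ.re + 1)) / n := by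
          rw [← Real.rpow_sub_one hn'.ne']; congr 1; rw [hq]; ring
        rw [this]; field_simp
    _ ≤ _ := by
        apply mul_le_mul_of_nonneg_left hlow
        positivity
end

section
/- Let a, b > 0, c = max{a, b}, φ as in the Section 2 assumptions, F(z) = ∫_{-a}^{b} φ(t) e^{zt} dt, and a_n = (1/n!) ∫_{-a}^{b} φ(t) t^n dt its Taylor coefficients. Then along the index subsequence guaranteeing nondegeneracy, |a_n|^{-1/n} ∼ n/(e c) as n → ∞, and consequently the order of the entire function F equals 1. -/
open MeasureTheory intervalIntegral Complex Filter Real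


lemma rpow_geom (r q : ℝ) (hq0 : 0 ≤ q) (hq : q < 1) :
    Tendsto (fun n : ℕ => (n : ℝ) ^ r * q ^ n) atTop (nhds 0) := by
  rcases hq0.eq_or_lt with h | h
  · subst h
    refine tendsto_const_nhds.congr' ?_
    filter_upwards [eventually_gt_atTop 0] with n hn
    simp [hn.ne']
  · have := (tendsto_rpow_mul_exp_neg_mul_atTop_nhds_zero r (-Real.log q)
      (by have := Real.log_neg h hq; linarith)).comp tendsto_natCast_atTop_atTop
    refine this.congr fun n => ?_
    simp only [Function.comp, neg_neg]
    rw [mul_comm (Real.log q), Real.exp_nat_mul, Real.exp_log h]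

lemma beta_lim (a : ℝ) (ha : 0 < a) (μ : ℂ) (hμ : -1 < μ.re) :
    Tendsto (fun n : ℕ => (n : ℂ) ^ (μ + 1) / (a : ℂ) ^ n *
      ∫ t in (0:ℝ)..a, (t : ℂ) ^ μ * ((a - t : ℝ) : ℂ) ^ n) atTop
      (nhds ((a : ℂ) ^ (μ + 1) * Complex.Gamma (μ + 1))) := by
  have h := (Complex.GammaSeq_tendsto_Gamma (μ + 1)).const_mul ((a : ℂ) ^ (μ + 1))
  refine h.congr' ?_
  filter_upwards [eventually_gt_atTop 0] with n hn
  have hac : (a : ℂ) ≠ 0 := by exact_mod_cast ha.ne'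
  rw [Complex.GammaSeq_eq_betaIntegral_of_re_pos (by simp; linarith)]
  have h2 := Complex.betaIntegral_scaled (μ + 1) (n + 1) ha
  simp only [add_sub_cancel_right, cpow_natCast] at h2
  push_cast
  rw [h2]
  have : μ + 1 + (n + 1 : ℂ) - 1 = μ + 1 + n := by ring
  rw [this, cpow_add (μ + 1) (n : ℂ) hac, cpow_natCast]
  field_simp

lemma watson (a : ℝ) (ha : 0 < a) (μ : ℂ) (hμ : -1 < μ.re) (g f : ℝ → ℂ)
    (hg : IntervalIntegrable g volume 0 a) (hf : ContinuousAt f 0)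
    (hgf : ∀ t ∈ Set.Ioc 0 a, g t = (t : ℂ) ^ μ * f t) :
    Tendsto (fun n : ℕ => (n : ℂ) ^ (μ + 1) / (a : ℂ) ^ n *
      ∫ t in (0:ℝ)..a, g t * ((a - t : ℝ) : ℂ) ^ n) atTop
      (nhds (f 0 * ((a : ℂ) ^ (μ + 1) * Complex.Gamma (μ + 1)))) := by
  have hmain := (beta_lim a ha μ hμ).const_mul (f 0)
  have hci : IntervalIntegrable (fun t : ℝ => (t : ℂ) ^ μ) volume 0 a :=
    intervalIntegrable_cpow' hμ
  have hri : IntervalIntegrable (fun t : ℝ => t ^ μ.re) volume 0 a :=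
    intervalIntegrable_rpow' hμ
  have hpc : ∀ n : ℕ, ContinuousOn (fun t : ℝ => ((a - t : ℝ) : ℂ) ^ n) (Set.uIcc 0 a) :=
    fun n => by fun_prop
  have hpr : ∀ n : ℕ, ContinuousOn (fun t : ℝ => (a - t) ^ n) (Set.uIcc 0 a) :=
    fun n => by fun_prop
  set h : ℝ → ℂ := fun t => g t - f 0 * (t : ℂ) ^ μ with hh
  have hhi : IntervalIntegrable h volume 0 a := hg.sub (hci.const_mul _)
  -- the real comparison integral
  have hJ : Tendsto (fun n : ℕ => (n : ℝ) ^ (μ.re + 1) / a ^ n *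
      ∫ t in (0:ℝ)..a, t ^ μ.re * (a - t) ^ n) atTop
      (nhds ‖(a : ℂ) ^ ((μ.re : ℂ) + 1) * Complex.Gamma ((μ.re : ℂ) + 1)‖) := by
    have h1 := (beta_lim a ha (μ.re : ℂ) (by simpa using hμ)).norm
    refine h1.congr' ?_
    filter_upwards [eventually_gt_atTop 0] with n hn
    have e : (∫ t in (0:ℝ)..a, (t : ℂ) ^ (μ.re : ℂ) * ((a - t : ℝ) : ℂ) ^ n) =
        ((∫ t in (0:ℝ)..a, t ^ μ.re * (a - t) ^ n : ℝ) : ℂ) := by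
      rw [← intervalIntegral.integral_ofReal]
      refine intervalIntegral.integral_congr fun t ht => ?_
      rw [Set.uIcc_of_le ha.le] at ht
      rw [ofReal_mul, ofReal_cpow ht.1, ofReal_pow]
    rw [e, norm_mul, norm_div, Complex.norm_natCast_cpow_of_pos hn, norm_pow, norm_real, norm_real,
      Real.norm_of_nonneg ha.le, Real.norm_of_nonneg]
    · simp
    · apply intervalIntegral.integral_nonneg ha.le
      intro t ht
      exact mul_nonneg (Real.rpow_nonneg ht.1 _) (pow_nonneg (by linarith [ht.2]) _)
  set G := ‖(a : ℂ) ^ ((μ.re : ℂ) + 1) * Complex.Gamma ((μ.re : ℂ) + 1)‖ with hG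
  have hG0 : 0 ≤ G := norm_nonneg _
  have herr : Tendsto (fun n : ℕ => (n : ℂ) ^ (μ + 1) / (a : ℂ) ^ n *
      ∫ t in (0:ℝ)..a, h t * ((a - t : ℝ) : ℂ) ^ n) atTop (nhds 0) := by
    rw [Metric.tendsto_atTop']
    suffices H : ∀ ε > 0, ∀ᶠ n : ℕ in atTop, ‖(n : ℂ) ^ (μ + 1) / (a : ℂ) ^ n *
      ∫ t in (0:ℝ)..a, h t * ((a - t : ℝ) : ℂ) ^ n‖ < ε by
      intro ε hε
      obtain ⟨m, hm⟩ := eventually_atTop.1 (H ε hε)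
      exact ⟨m, fun n hn => by simpa [dist_zero_right] using hm n hn.le⟩
    intro ε hε
    set e := ε / (2 * (G + 1)) with he
    have he0 : 0 < e := by positivity
    obtain ⟨η, hη, hfη⟩ := Metric.continuousAt_iff.1 hf e he0
    set η' := min (η / 2) (a / 2) with hη'
    have hη'0 : 0 < η' := by positivity
    have hη'1 : η' < η := (min_le_left _ _).trans_lt (by linarith)
    have hη'2 : η' < a := (min_le_right _ _).trans_lt (by linarith)
    set H := ∫ t in (0:ℝ)..a, ‖h t‖ with hH
    have hb : ∀ n : ℕ, ‖∫ t in (0:ℝ)..a, h t * ((a - t : ℝ) : ℂ) ^ n‖ ≤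
        e * (∫ t in (0:ℝ)..a, t ^ μ.re * (a - t) ^ n) + H * (a - η') ^ n := by
      intro n
      have i1 : IntervalIntegrable (fun t : ℝ => e * (t ^ μ.re * (a - t) ^ n)) volume 0 a :=
        (hri.mul_continuousOn (hpr n)).const_mul _
      have i2 : IntervalIntegrable (fun t : ℝ => ‖h t‖ * (a - η') ^ n) volume 0 a :=
        hhi.norm.mul_const _
      rw [← intervalIntegral.integral_const_mul, hH, ← intervalIntegral.integral_mul_const,
        ← intervalIntegral.integral_add i1 i2]
      apply intervalIntegral.norm_integral_le_of_norm_le ha.le _ (i1.add i2)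
      refine Eventually.of_forall fun t ht => ?_
      have hat : 0 ≤ a - t := by linarith [ht.2]
      rw [norm_mul, norm_pow, norm_real, Real.norm_of_nonneg hat]
      have n1 : 0 ≤ e * (t ^ μ.re * (a - t) ^ n) :=
        mul_nonneg he0.le (mul_nonneg (Real.rpow_nonneg ht.1.le _) (pow_nonneg hat _))
      have n2 : 0 ≤ ‖h t‖ * (a - η') ^ n :=
        mul_nonneg (norm_nonneg _) (pow_nonneg (by linarith) _)
      rcases le_total t η' with htη | htη
      · have : ‖h t‖ ≤ e * t ^ μ.re := by
          have h1 : h t = (t : ℂ) ^ μ * (f t - f 0) := by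
            simp only [hh]; rw [hgf t ht]; ring
          rw [h1, norm_mul, norm_cpow_eq_rpow_re_of_pos ht.1, mul_comm]
          apply mul_le_mul_of_nonneg_right _ (Real.rpow_nonneg ht.1.le _)
          have := hfη (x := t) (by rw [Real.dist_eq, sub_zero, abs_of_pos ht.1]; linarith)
          rw [dist_eq_norm] at this
          exact this.le
        calc _ ≤ e * t ^ μ.re * (a - t) ^ n := by gcongr
          _ ≤ _ := by rw [mul_assoc]; linarith
      · have : ‖h t‖ * (a - t) ^ n ≤ ‖h t‖ * (a - η') ^ n := by gcongr
        linarith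
    have hlim : Tendsto (fun n : ℕ => e * ((n : ℝ) ^ (μ.re + 1) / a ^ n *
      ∫ t in (0:ℝ)..a, t ^ μ.re * (a - t) ^ n) + H * ((n : ℝ) ^ (μ.re + 1) * ((a - η') / a) ^ n))
        atTop (nhds (e * G + H * 0)) :=
      (hJ.const_mul e).add ((rpow_geom (μ.re + 1) ((a - η') / a)
        (div_nonneg (by linarith) ha.le) (by rw [div_lt_one ha]; linarith)).const_mul H)
    have hlt : e * G + H * 0 < ε := by
      rw [he]
      have : ε / (2 * (G + 1)) * G + H * 0 = ε * (G / (2 * (G + 1))) := by ring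
      rw [this]
      have : G / (2 * (G + 1)) < 1 := by rw [div_lt_one (by positivity)]; linarith
      nlinarith
    filter_upwards [hlim.eventually (gt_mem_nhds hlt), eventually_gt_atTop 0] with n hn hn0
    refine lt_of_le_of_lt ?_ hn
    rw [norm_mul, norm_div, Complex.norm_natCast_cpow_of_pos hn0, norm_pow, norm_real,
      Real.norm_of_nonneg ha.le]
    calc _ ≤ (n : ℝ) ^ (μ + 1).re / a ^ n * (e * (∫ t in (0:ℝ)..a, t ^ μ.re * (a - t) ^ n) + H * (a - η') ^ n) := by
          gcongr; exact hb n
      _ = _ := by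
          rw [div_pow, add_re, one_re]; field_simp
  have := hmain.add herr
  rw [add_zero] at this
  refine this.congr fun n => ?_
  have : ∫ t in (0:ℝ)..a, g t * ((a - t : ℝ) : ℂ) ^ n =
      f 0 * (∫ t in (0:ℝ)..a, (t : ℂ) ^ μ * ((a - t : ℝ) : ℂ) ^ n) +
      ∫ t in (0:ℝ)..a, h t * ((a - t : ℝ) : ℂ) ^ n := by
    rw [← intervalIntegral.integral_const_mul, ← intervalIntegral.integral_add
      ((hci.mul_continuousOn (hpc n)).const_mul _) (hhi.mul_continuousOn (hpc n))]
    refine intervalIntegral.integral_congr fun t ht => ?_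
    simp only [hh]; ring
  rw [this]; ring

lemma dominance (x y s t : ℂ) (hx : x ≠ 0) (P Q I : ℕ → ℂ) (p q : ℂ) (hp : p ≠ 0)
    (hP : Tendsto P atTop (nhds p)) (hQ : Tendsto Q atTop (nhds q))
    (hI : ∀ n : ℕ, 0 < n → I n = x ^ n * (n : ℂ) ^ (-s) * P n + y ^ n * (n : ℂ) ^ (-t) * Q n)
    (hr : Tendsto (fun n : ℕ => (n : ℝ) ^ (s.re - t.re) * (‖y‖ / ‖x‖) ^ n) atTop (nhds 0)) :
    ∀ᶠ n : ℕ in atTop, ‖p‖ / 2 * ‖x‖ ^ n * (n : ℝ) ^ (-s.re) ≤ ‖I n‖ := by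
  have hr' : Tendsto (fun n : ℕ => (n : ℂ) ^ (s - t) * (y / x) ^ n) atTop (nhds 0) := by
    rw [tendsto_zero_iff_norm_tendsto_zero]
    refine hr.congr' ?_
    filter_upwards [eventually_gt_atTop 0] with n hn
    rw [norm_mul, norm_natCast_cpow_of_pos hn, norm_pow, norm_div, sub_re]
  have hsum := (hP.add (hr'.mul hQ)).norm
  rw [zero_mul, add_zero] at hsum
  have hp0 : 0 < ‖p‖ := norm_pos_iff.2 hp
  filter_upwards [hsum.eventually (lt_mem_nhds (show ‖p‖ / 2 < ‖p‖ by linarith)),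
    eventually_gt_atTop 0] with n hn hn0
  have hnc : (n : ℂ) ≠ 0 := by exact_mod_cast hn0.ne'
  have e : I n = x ^ n * (n : ℂ) ^ (-s) * (P n + (n : ℂ) ^ (s - t) * (y / x) ^ n * Q n) := by
    rw [hI n hn0, div_pow]
    have : (n : ℂ) ^ (-t) = (n : ℂ) ^ (-s) * (n : ℂ) ^ (s - t) := by
      rw [← cpow_add _ _ hnc]; congr 1; ring
    rw [this]; field_simp
  rw [e, norm_mul, norm_mul, norm_pow, norm_natCast_cpow_of_pos hn0, neg_re]
  calc _ = ‖x‖ ^ n * (n : ℝ) ^ (-s.re) * (‖p‖ / 2) := by ring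
    _ ≤ _ := by gcongr

lemma log_fact : Tendsto (fun n : ℕ => Real.log (n.factorial) / n - Real.log n + 1) atTop (nhds 0) := by
  have hpi : (0:ℝ) < √π := by positivity
  have h := (Real.continuousAt_log hpi.ne').tendsto.comp Stirling.tendsto_stirlingSeq_sqrt_pi
  have hn : Tendsto (fun n : ℕ => (n : ℝ)) atTop atTop := tendsto_natCast_atTop_atTop
  have h1 := h.div_atTop hn
  have h2 : Tendsto (fun n : ℕ => Real.log n / n) atTop (nhds 0) := by
    have := (Real.isLittleO_log_id_atTop.tendsto_div_nhds_zero).comp hn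
    exact this
  have h3 : Tendsto (fun n : ℕ => Real.log 2 / (n : ℝ)) atTop (nhds 0) :=
    tendsto_const_nhds.div_atTop hn
  have h4 := (h1.add (h2.div_const 2)).add (h3.div_const 2)
  simp only [zero_div, add_zero] at h4
  refine h4.congr' ?_
  filter_upwards [eventually_gt_atTop 0] with n hn0
  have hr : (0:ℝ) < n := by exact_mod_cast hn0
  have hf : (0:ℝ) < n.factorial := by exact_mod_cast n.factorial_pos
  simp only [Function.comp, Stirling.stirlingSeq]
  rw [Real.log_div hf.ne' (by positivity), Real.log_mul (by positivity) (by positivity),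
    Real.log_sqrt (by positivity), Real.log_mul (by positivity) (by positivity), Real.log_pow,
    Real.log_div hr.ne' (by positivity), Real.log_exp]
  field_simp
  ring

lemma ratio_one {ι : Type*} {l : Filter ι} (w d : ι → ℝ) (L : ℝ) (hw : Tendsto w l atTop)
    (hd : Tendsto (fun i => d i - w i) l (nhds L)) : Tendsto (fun i => w i / d i) l (nhds 1) := by
  have h := (hd.div_atTop hw).const_add 1
  have h2 := h.inv₀ (by norm_num)
  rw [add_zero, inv_one] at h2
  refine h2.congr' ?_
  filter_upwards [hw.eventually (eventually_gt_atTop 0)] with i hi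
  have : 1 + (d i - w i) / w i = d i / w i := by field_simp; ring
  rw [this, inv_div]

lemma limsup_one (u v : ℕ → ℝ) (N : ℕ → ℕ) (hN : Tendsto N atTop atTop)
    (huv : ∀ᶠ n in atTop, u n ≤ v n) (hv : Tendsto v atTop (nhds 1))
    (hu : Tendsto (fun k => u (N k)) atTop (nhds 1)) : limsup u atTop = 1 := by
  have hfreq : ∀ y < (1:ℝ), ∃ᶠ n in atTop, y < u n := fun y hy =>
    hN.frequently (hu.eventually (lt_mem_nhds hy)).frequently
  have hco : IsCoboundedUnder (· ≤ ·) atTop u :=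
    IsCoboundedUnder.of_frequently_ge ((hfreq 0 one_pos).mono fun _ h => h.le)
  have hbd : IsBoundedUnder (· ≤ ·) atTop u := hv.isBoundedUnder_le.mono_le huv
  apply le_antisymm
  · rw [← hv.limsup_eq]
    exact limsup_le_limsup huv hco hv.isBoundedUnder_le
  · exact (le_limsup_iff hco hbd).2 hfreq

lemma final (c : ℝ) (hc : 0 < c) (A I : ℕ → ℂ) (hA : ∀ n, A n = (1 / (n.factorial : ℂ)) * I n)
    (B : ℝ) (hB : 0 < B) (hI : ∀ n, ‖I n‖ ≤ B * c ^ n) (N : ℕ → ℕ) (hN : StrictMono N)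
    (C κ : ℝ) (hC : 0 < C)
    (hlow : ∀ᶠ k in atTop, C * c ^ (N k) * (N k : ℝ) ^ (-κ) ≤ ‖I (N k)‖) :
    Tendsto (fun k : ℕ =>
        ‖A (N k)‖ ^ (-(1 : ℝ) / (N k)) / ((N k : ℝ) / (Real.exp 1 * c)))
      atTop (nhds 1) ∧
    Filter.limsup (fun n : ℕ =>
        Real.log n / Real.log (‖A n‖ ^ (-(1 : ℝ) / n))) atTop = 1 := by
  have hNt := hN.tendsto_atTop
  have hn : Tendsto (fun n : ℕ => (n : ℝ)) atTop atTop := tendsto_natCast_atTop_atTop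
  have hlog : Tendsto (fun n : ℕ => Real.log n) atTop atTop := Real.tendsto_log_atTop.comp hn
  have hlogn : Tendsto (fun n : ℕ => Real.log n / n) atTop (nhds 0) :=
    (Real.isLittleO_log_id_atTop.tendsto_div_nhds_zero).comp hn
  have hcn : ∀ r : ℝ, Tendsto (fun n : ℕ => r / (n : ℝ)) atTop (nhds 0) := fun r =>
    tendsto_const_nhds.div_atTop hn
  set D : ℕ → ℝ := fun n => Real.log (‖A n‖ ^ (-(1 : ℝ) / n)) with hD
  have hDeq : ∀ n, 0 < n → I n ≠ 0 →
      D n = Real.log n.factorial / n - Real.log ‖I n‖ / n := by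
    intro n hn0 hIn
    have hI0 : 0 < ‖I n‖ := norm_pos_iff.2 hIn
    have hf : (0:ℝ) < n.factorial := by exact_mod_cast n.factorial_pos
    have hA0 : ‖A n‖ = ‖I n‖ / n.factorial := by
      rw [hA, norm_mul, norm_div, norm_one, Complex.norm_natCast]; ring
    simp only [hD]
    rw [hA0, Real.log_rpow (by positivity), Real.log_div hI0.ne' hf.ne']
    ring
  set E : ℕ → ℝ := fun n => Real.log n.factorial / n - Real.log B / n - Real.log c with hE
  have hED : ∀ n, 0 < n → I n ≠ 0 → E n ≤ D n := by
    intro n hn0 hIn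
    have hr : (0:ℝ) < n := by exact_mod_cast hn0
    have hI0 : 0 < ‖I n‖ := norm_pos_iff.2 hIn
    rw [hDeq n hn0 hIn]
    have h1 := Real.log_le_log hI0 (hI n)
    rw [Real.log_mul hB.ne' (by positivity), Real.log_pow] at h1
    have h2 : Real.log ‖I n‖ / n ≤ (Real.log B + n * Real.log c) / n := by gcongr
    have h3 : (Real.log B + n * Real.log c) / n = Real.log B / n + Real.log c := by field_simp
    simp only [hE]; linarith
  have hElim : Tendsto (fun n => E n - Real.log n) atTop (nhds (-1 - Real.log c)) := by
    have := (log_fact.sub (hcn (Real.log B))).sub_const (1 + Real.log c)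
    convert this using 2
    · simp only [hE]; ring
    · ring
  set U : ℕ → ℝ := fun n =>
    Real.log n.factorial / n - Real.log C / n - Real.log c + κ * (Real.log n / n) with hU
  have hUlim : Tendsto (fun n => U n - Real.log n) atTop (nhds (-1 - Real.log c)) := by
    have := ((log_fact.sub (hcn (Real.log C))).add (hlogn.const_mul κ)).sub_const (1 + Real.log c)
    convert this using 2
    · simp only [hU]; ring
    · ring
  have hev : ∀ᶠ k in atTop, 0 < N k ∧ I (N k) ≠ 0 ∧ D (N k) ≤ U (N k) := by
    filter_upwards [hlow, hNt.eventually (eventually_gt_atTop 0)] with k hk hk0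
    have hr : (0:ℝ) < N k := by exact_mod_cast hk0
    have hpos : 0 < C * c ^ (N k) * (N k : ℝ) ^ (-κ) := by positivity
    have hIn : I (N k) ≠ 0 := norm_pos_iff.1 (hpos.trans_le hk)
    refine ⟨hk0, hIn, ?_⟩
    rw [hDeq _ hk0 hIn]
    have h1 := Real.log_le_log hpos hk
    rw [Real.log_mul (by positivity) (by positivity), Real.log_mul (by positivity) (by positivity),
      Real.log_pow, Real.log_rpow hr] at h1
    have h2 : (Real.log C + N k * Real.log c + -κ * Real.log (N k)) / (N k : ℝ) ≤ Real.log ‖I (N k)‖ / (N k : ℝ) := by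
      gcongr
    have h3 : (Real.log C + N k * Real.log c + -κ * Real.log (N k)) / (N k : ℝ) =
      Real.log C / (N k : ℝ) + Real.log c - κ * (Real.log (N k) / N k) := by field_simp; ring
    simp only [hU]; linarith
  have hDlim : Tendsto (fun k => D (N k) - Real.log (N k)) atTop (nhds (-1 - Real.log c)) := by
    refine tendsto_of_tendsto_of_tendsto_of_le_of_le' (hElim.comp hNt) (hUlim.comp hNt) ?_ ?_
    · filter_upwards [hev] with k hk
      have := hED _ hk.1 hk.2.1
      simp only [Function.comp]; linarith
    · filter_upwards [hev] with k hk
      simp only [Function.comp]; linarith [hk.2.2]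
  constructor
  · have h1 := (Real.continuous_exp.tendsto _).comp (hDlim.add_const (1 + Real.log c))
    have : -1 - Real.log c + (1 + Real.log c) = 0 := by ring
    rw [this, Real.exp_zero] at h1
    refine h1.congr' ?_
    filter_upwards [hev] with k hk
    have hr : (0:ℝ) < N k := by exact_mod_cast hk.1
    have hA0 : 0 < ‖A (N k)‖ := by
      rw [norm_pos_iff, hA]
      exact mul_ne_zero (one_div_ne_zero (by exact_mod_cast (N k).factorial_ne_zero)) hk.2.1
    have hpos : 0 < ‖A (N k)‖ ^ (-(1 : ℝ) / (N k)) := by positivity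
    simp only [Function.comp, hD]
    rw [Real.exp_add, Real.exp_sub, Real.exp_add, Real.exp_log hpos, Real.exp_log hr,
      Real.exp_log hc]
    field_simp
  · refine limsup_one _ (fun n => Real.log n / E n) N hNt ?_ (ratio_one _ _ _ hlog hElim)
      (ratio_one _ _ _ (hlog.comp hNt) hDlim)
    have hEat : Tendsto E atTop atTop := by
      have := hElim.add_atTop hlog
      simpa using this
    filter_upwards [hEat.eventually (eventually_gt_atTop 0), eventually_gt_atTop 0] with n hEn hn0
    have hl : 0 ≤ Real.log n := Real.log_natCast_nonneg n
    by_cases hIn : I n = 0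
    · have hA0 : A n = 0 := by rw [hA, hIn, mul_zero]
      have : -(1:ℝ) / n ≠ 0 := by
        have : (n:ℝ) ≠ 0 := by exact_mod_cast hn0.ne'
        exact div_ne_zero (by norm_num) this
      rw [hA0, norm_zero, Real.zero_rpow this, Real.log_zero, div_zero]
      positivity
    · exact div_le_div_of_nonneg_left hl hEn (hED n hn0 hIn)

/-- The Taylor coefficients of `F` satisfy `|a_n|^{-1/n} ∼ n/(ec)` along the
nondegenerate subsequence, and the order of the entire function `F` equals `1`. -/
theorem coefficient_growth_and_order_one
    (a b : ℝ) (ha : 0 < a) (hb : 0 < b) (c : ℝ) (hc : c = max a b)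
    (μ ν : ℂ) (hμ : -1 < μ.re) (hν : -1 < ν.re)
    (φ f₁ f₂ : ℝ → ℂ)
    (hint : IntervalIntegrable φ volume (-a) b)
    (hφ₁ : ∀ t ∈ Set.Icc (-a) b, φ t = ((t + a : ℝ) : ℂ) ^ μ * f₁ (t + a))
    (hφ₂ : ∀ t ∈ Set.Icc (-a) b, φ t = ((b - t : ℝ) : ℂ) ^ ν * f₂ (b - t))
    (hf₁0 : f₁ 0 ≠ 0) (hf₂0 : f₂ 0 ≠ 0)
    (hf₁ : ∃ δ > (0 : ℝ), (∀ t ∈ Set.Icc (0 : ℝ) δ, DifferentiableAt ℝ f₁ t) ∧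
          ∃ M : ℝ, ∀ t ∈ Set.Icc (0 : ℝ) δ, ‖deriv f₁ t‖ ≤ M)
    (hf₂ : ∃ δ > (0 : ℝ), (∀ t ∈ Set.Icc (0 : ℝ) δ, DifferentiableAt ℝ f₂ t) ∧
          ∃ M : ℝ, ∀ t ∈ Set.Icc (0 : ℝ) δ, ‖deriv f₂ t‖ ≤ M)
    (A : ℕ → ℂ)
    (hA : ∀ n : ℕ, A n = (1 / (n.factorial : ℂ)) * ∫ t in (-a)..b, φ t * (t : ℂ) ^ n)
    (N : ℕ → ℕ) (hN : StrictMono N)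
    (hnondeg : (a = b ∧ μ.re = ν.re) →
      ∃ ε > (0 : ℝ), ∀ k : ℕ,
        ε ≤ ‖(-1 : ℂ) ^ (N k) * f₁ 0 * Complex.Gamma (μ + 1) +
              f₂ 0 * Complex.Gamma (ν + 1) * (a : ℂ) ^ (ν - μ) * (N k : ℂ) ^ (μ - ν)‖) :
    Tendsto (fun k : ℕ =>
        ‖A (N k)‖ ^ (-(1 : ℝ) / (N k)) / ((N k : ℝ) / (Real.exp 1 * c)))
      atTop (nhds 1) ∧
    Filter.limsup (fun n : ℕ =>
        Real.log n / Real.log (‖A n‖ ^ (-(1 : ℝ) / n))) atTop = 1 := by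
  subst hc
  have hc0 : 0 < max a b := lt_max_of_lt_left ha
  have hab : -a ≤ b := by linarith
  have hi1 : IntervalIntegrable φ volume (-a) 0 :=
    hint.mono_set (by rw [Set.uIcc_of_le hab, Set.uIcc_of_le (by linarith)]
                      exact Set.Icc_subset_Icc le_rfl hb.le)
  have hi2 : IntervalIntegrable φ volume 0 b :=
    hint.mono_set (by rw [Set.uIcc_of_le hab, Set.uIcc_of_le hb.le]
                      exact Set.Icc_subset_Icc (by linarith) le_rfl)
  set I : ℕ → ℂ := fun n => ∫ t in (-a)..b, φ t * (t : ℂ) ^ n with hIdef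
  have hcf₁ : ContinuousAt f₁ 0 := by
    obtain ⟨δ, hδ, h, -⟩ := hf₁
    exact (h 0 ⟨le_rfl, hδ.le⟩).continuousAt
  have hcf₂ : ContinuousAt f₂ 0 := by
    obtain ⟨δ, hδ, h, -⟩ := hf₂
    exact (h 0 ⟨le_rfl, hδ.le⟩).continuousAt
  set P : ℕ → ℂ := fun n => (n : ℂ) ^ (μ + 1) / (a : ℂ) ^ n *
      ∫ t in (0:ℝ)..a, φ (t - a) * ((a - t : ℝ) : ℂ) ^ n with hPdef
  set Q : ℕ → ℂ := fun n => (n : ℂ) ^ (ν + 1) / (b : ℂ) ^ n *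
      ∫ t in (0:ℝ)..b, φ (b - t) * ((b - t : ℝ) : ℂ) ^ n with hQdef
  have hP : Tendsto P atTop (nhds (f₁ 0 * ((a : ℂ) ^ (μ + 1) * Complex.Gamma (μ + 1)))) := by
    refine watson a ha μ hμ (fun t => φ (t - a)) f₁ ?_ hcf₁ ?_
    · have := hi1.comp_sub_right a
      simpa using this
    · intro t ht
      have := hφ₁ (t - a) ⟨by linarith [ht.1], by linarith [ht.2]⟩
      simpa using this
  have hQ : Tendsto Q atTop (nhds (f₂ 0 * ((b : ℂ) ^ (ν + 1) * Complex.Gamma (ν + 1)))) := by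
    refine watson b hb ν hν (fun t => φ (b - t)) f₂ ?_ hcf₂ ?_
    · have := (hi2.comp_sub_left b).symm
      simpa using this
    · intro t ht
      have := hφ₂ (b - t) ⟨by linarith [ht.2], by linarith [ht.1]⟩
      simpa using this
  have hac : (a : ℂ) ≠ 0 := by exact_mod_cast ha.ne'
  have hbc : (b : ℂ) ≠ 0 := by exact_mod_cast hb.ne'
  have hp0 : f₁ 0 * ((a : ℂ) ^ (μ + 1) * Complex.Gamma (μ + 1)) ≠ 0 :=
    mul_ne_zero hf₁0 (mul_ne_zero (by simp [cpow_eq_zero_iff, hac])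
      (Complex.Gamma_ne_zero_of_re_pos (by simp; linarith)))
  have hq0 : f₂ 0 * ((b : ℂ) ^ (ν + 1) * Complex.Gamma (ν + 1)) ≠ 0 :=
    mul_ne_zero hf₂0 (mul_ne_zero (by simp [cpow_eq_zero_iff, hbc])
      (Complex.Gamma_ne_zero_of_re_pos (by simp; linarith)))
  have hI : ∀ n : ℕ, 0 < n → I n = (-a : ℂ) ^ n * (n : ℂ) ^ (-(μ + 1)) * P n +
      (b : ℂ) ^ n * (n : ℂ) ^ (-(ν + 1)) * Q n := by
    intro n hn
    have hnc : (n : ℂ) ≠ 0 := by exact_mod_cast hn.ne'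
    have hpc : ∀ u v : ℝ, ContinuousOn (fun t : ℝ => (t : ℂ) ^ n) (Set.uIcc u v) :=
      fun u v => by fun_prop
    have e1 : ∫ t in (-a)..0, φ t * (t : ℂ) ^ n =
        (-1) ^ n * ∫ t in (0:ℝ)..a, φ (t - a) * ((a - t : ℝ) : ℂ) ^ n := by
      have := intervalIntegral.integral_comp_sub_right (a := 0) (b := a)
        (fun t : ℝ => φ t * (t : ℂ) ^ n) a
      rw [zero_sub, sub_self] at this
      rw [← this, ← intervalIntegral.integral_const_mul]
      refine intervalIntegral.integral_congr fun t _ => ?_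
      have : ((t - a : ℝ) : ℂ) = (-1) * ((a - t : ℝ) : ℂ) := by push_cast; ring
      simp only [this, mul_pow]; ring
    have e2 : ∫ t in (0:ℝ)..b, φ t * (t : ℂ) ^ n =
        ∫ t in (0:ℝ)..b, φ (b - t) * ((b - t : ℝ) : ℂ) ^ n := by
      have := intervalIntegral.integral_comp_sub_left (a := 0) (b := b)
        (fun t : ℝ => φ t * (t : ℂ) ^ n) b
      rw [sub_zero, sub_self] at this
      rw [← this]
    have e3 : I n = (∫ t in (-a)..0, φ t * (t : ℂ) ^ n) + ∫ t in (0:ℝ)..b, φ t * (t : ℂ) ^ n :=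
      (intervalIntegral.integral_add_adjacent_intervals (hi1.mul_continuousOn (hpc _ _))
        (hi2.mul_continuousOn (hpc _ _))).symm
    have k1 : (n : ℂ) ^ (μ + 1) ≠ 0 := by simp [cpow_eq_zero_iff, hnc]
    have k2 : (n : ℂ) ^ (ν + 1) ≠ 0 := by simp [cpow_eq_zero_iff, hnc]
    rw [e3, e1, e2, cpow_neg, cpow_neg, neg_eq_neg_one_mul (a : ℂ), mul_pow]
    simp only [hPdef, hQdef]
    field_simp
  have hupper : ∀ n, ‖I n‖ ≤ ((∫ t in (-a)..b, ‖φ t‖) + 1) * (max a b) ^ n := by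
    intro n
    have h1 : ‖I n‖ ≤ ∫ t in (-a)..b, ‖φ t‖ * (max a b) ^ n := by
      apply intervalIntegral.norm_integral_le_of_norm_le hab _ (hint.norm.mul_const _)
      refine Eventually.of_forall fun t ht => ?_
      rw [norm_mul, norm_pow, norm_real, Real.norm_eq_abs]
      have : |t| ≤ max a b := by
        rw [abs_le]
        exact ⟨by linarith [ht.1, le_max_left a b], ht.2.trans (le_max_right a b)⟩
      gcongr
    rw [intervalIntegral.integral_mul_const] at h1
    have : 0 ≤ (max a b) ^ n := by positivity
    linarith
  have hBpos : 0 < (∫ t in (-a)..b, ‖φ t‖) + 1 := by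
    have : 0 ≤ ∫ t in (-a)..b, ‖φ t‖ := intervalIntegral.integral_nonneg hab fun t _ => norm_nonneg _
    linarith
  have hna : ‖(-a : ℂ)‖ = a := by rw [norm_neg, norm_real, Real.norm_of_nonneg ha.le]
  have hnb : ‖(b : ℂ)‖ = b := by rw [norm_real, Real.norm_of_nonneg hb.le]
  have hI' : ∀ n : ℕ, 0 < n → I n = (b : ℂ) ^ n * (n : ℂ) ^ (-(ν + 1)) * Q n +
      (-a : ℂ) ^ n * (n : ℂ) ^ (-(μ + 1)) * P n := fun n hn => by rw [hI n hn, add_comm]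
  have hNt := hN.tendsto_atTop
  have hneg : ∀ r : ℝ, r < 0 → Tendsto (fun n : ℕ => (n : ℝ) ^ r) atTop (nhds 0) := by
    intro r hr
    have := (tendsto_rpow_neg_atTop (y := -r) (by linarith)).comp
      (tendsto_natCast_atTop_atTop (R := ℝ))
    simpa [Function.comp_def] using this
  have hdomA : max a b = a → Tendsto (fun n : ℕ => (n : ℝ) ^ ((μ + 1).re - (ν + 1).re) *
      (‖(b : ℂ)‖ / ‖(-a : ℂ)‖) ^ n) atTop (nhds 0) →
      ∃ C κ : ℝ, 0 < C ∧ ∀ᶠ k in atTop,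
        C * (max a b) ^ (N k) * (N k : ℝ) ^ (-κ) ≤ ‖I (N k)‖ := by
    intro hm hr
    refine ⟨_, (μ + 1).re, half_pos (norm_pos_iff.2 hp0), ?_⟩
    have := dominance (-a) b (μ + 1) (ν + 1) (neg_ne_zero.2 hac) P Q I _ _ hp0 hP hQ hI hr
    rw [hna] at this
    rw [hm]
    exact hNt.eventually this
  have hdomB : max a b = b → Tendsto (fun n : ℕ => (n : ℝ) ^ ((ν + 1).re - (μ + 1).re) *
      (‖(-a : ℂ)‖ / ‖(b : ℂ)‖) ^ n) atTop (nhds 0) →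
      ∃ C κ : ℝ, 0 < C ∧ ∀ᶠ k in atTop,
        C * (max a b) ^ (N k) * (N k : ℝ) ^ (-κ) ≤ ‖I (N k)‖ := by
    intro hm hr
    refine ⟨_, (ν + 1).re, half_pos (norm_pos_iff.2 hq0), ?_⟩
    have := dominance b (-a) (ν + 1) (μ + 1) hbc Q P I _ _ hq0 hQ hP hI' hr
    rw [hnb] at this
    rw [hm]
    exact hNt.eventually this
  have hlow : ∃ C κ : ℝ, 0 < C ∧ ∀ᶠ k in atTop,
      C * (max a b) ^ (N k) * (N k : ℝ) ^ (-κ) ≤ ‖I (N k)‖ := by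
    rcases lt_trichotomy a b with h | h | h
    · refine hdomB (max_eq_right h.le) ?_
      rw [hna, hnb]
      exact rpow_geom _ _ (by positivity) ((div_lt_one hb).2 h)
    · rcases lt_trichotomy μ.re ν.re with h' | h' | h'
      · refine hdomA (by rw [h, max_self]) ?_
        rw [hna, hnb, h, div_self hb.ne']
        simp only [one_pow, mul_one]
        exact hneg _ (by simp; linarith)
      · subst h
        obtain ⟨ε, hε, hnd⟩ := hnondeg ⟨rfl, h'⟩
        have haμ : 0 < a ^ (μ.re + 1) := by positivity
        refine ⟨ε * a ^ (μ.re + 1) / 2, μ.re + 1, by positivity, ?_⟩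
        -- error terms
        have hPe : Tendsto (fun k => ‖P (N k) - f₁ 0 * ((a : ℂ) ^ (μ + 1) * Complex.Gamma (μ + 1))‖)
            atTop (nhds 0) := by
          have := ((hP.comp hNt).sub_const
            (f₁ 0 * ((a : ℂ) ^ (μ + 1) * Complex.Gamma (μ + 1)))).norm
          simpa using this
        have hQe : Tendsto (fun k => ‖Q (N k) - f₂ 0 * ((a : ℂ) ^ (ν + 1) * Complex.Gamma (ν + 1))‖)
            atTop (nhds 0) := by
          have := ((hQ.comp hNt).sub_const
            (f₂ 0 * ((a : ℂ) ^ (ν + 1) * Complex.Gamma (ν + 1)))).norm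
          simpa using this
        have hsum := hPe.add hQe
        rw [add_zero] at hsum
        filter_upwards [hsum.eventually (gt_mem_nhds
          (show 0 < ε * a ^ (μ.re + 1) / 2 by positivity)),
          hNt.eventually (eventually_gt_atTop 0)] with k hk hk0
        have hnk := hnd k
        generalize N k = n at hk hk0 hnk ⊢
        have hnc : (n : ℂ) ≠ 0 := by exact_mod_cast hk0.ne'
        set p := f₁ 0 * ((a : ℂ) ^ (μ + 1) * Complex.Gamma (μ + 1)) with hp
        set q := f₂ 0 * ((a : ℂ) ^ (ν + 1) * Complex.Gamma (ν + 1)) with hq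
        have e1 : I n = (a : ℂ) ^ n * (n : ℂ) ^ (-(μ + 1)) *
            ((-1) ^ n * P n + (n : ℂ) ^ (μ - ν) * Q n) := by
          rw [hI n hk0, neg_eq_neg_one_mul (a : ℂ), mul_pow]
          have : (n : ℂ) ^ (-(ν + 1)) = (n : ℂ) ^ (-(μ + 1)) * (n : ℂ) ^ (μ - ν) := by
            rw [← cpow_add _ _ hnc]; congr 1; ring
          rw [this]; ring
        have e2 : (-1) ^ n * P n + (n : ℂ) ^ (μ - ν) * Q n =
            (a : ℂ) ^ (μ + 1) * ((-1 : ℂ) ^ n * f₁ 0 * Complex.Gamma (μ + 1) +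
              f₂ 0 * Complex.Gamma (ν + 1) * (a : ℂ) ^ (ν - μ) * (n : ℂ) ^ (μ - ν)) +
            ((-1) ^ n * (P n - p) + (n : ℂ) ^ (μ - ν) * (Q n - q)) := by
          have : (a : ℂ) ^ (ν + 1) = (a : ℂ) ^ (μ + 1) * (a : ℂ) ^ (ν - μ) := by
            rw [← cpow_add _ _ hac]; congr 1; ring
          rw [hp, hq, this]; ring
        have hn1 : ‖(n : ℂ) ^ (μ - ν)‖ = 1 := by
          rw [norm_natCast_cpow_of_pos hk0, sub_re, h', sub_self, Real.rpow_zero]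
        have e3 : ‖(-1) ^ n * (P n - p) + (n : ℂ) ^ (μ - ν) * (Q n - q)‖ ≤
            ‖P n - p‖ + ‖Q n - q‖ := by
          refine (norm_add_le _ _).trans ?_
          rw [norm_mul, norm_mul, hn1]
          simp
        have e4 : ε * a ^ (μ.re + 1) / 2 ≤ ‖(-1) ^ n * P n + (n : ℂ) ^ (μ - ν) * Q n‖ := by
          rw [e2]
          have t1 := norm_sub_le_norm_add ((a : ℂ) ^ (μ + 1) * ((-1 : ℂ) ^ n * f₁ 0 * Complex.Gamma (μ + 1) +
              f₂ 0 * Complex.Gamma (ν + 1) * (a : ℂ) ^ (ν - μ) * (n : ℂ) ^ (μ - ν)))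
              ((-1) ^ n * (P n - p) + (n : ℂ) ^ (μ - ν) * (Q n - q))
          have t2 := mul_le_mul_of_nonneg_left hnk haμ.le
          rw [norm_mul, norm_cpow_eq_rpow_re_of_pos ha, add_re, one_re] at t1
          linarith
        rw [e1, norm_mul, norm_mul, norm_pow, norm_natCast_cpow_of_pos hk0, hnb, max_self, neg_re,
          add_re, one_re]
        calc _ = a ^ n * (n : ℝ) ^ (-(μ.re + 1)) * (ε * a ^ (μ.re + 1) / 2) := by ring
          _ ≤ _ := by gcongr
      · refine hdomB (by rw [h, max_self]) ?_
        rw [hna, hnb, h, div_self hb.ne']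
        simp only [one_pow, mul_one]
        exact hneg _ (by simp; linarith)
    · refine hdomA (max_eq_left h.le) ?_
      rw [hna, hnb]
      exact rpow_geom _ _ (by positivity) ((div_lt_one ha).2 h)
  obtain ⟨C, κ, hC, hlow⟩ := hlow
  exact final (max a b) hc0 A I hA _ hBpos hupper N hN C κ hC hlow
end

section
/- For Re α > -1/2, the Bessel function of the first kind satisfies Poisson's integral representation: J_α(z) = (z/2)^α / (Γ(α + 1/2) Γ(1/2)) · ∫_{-1}^{1} (1 - t²)^{α - 1/2} e^{izt} dt. -/
open MeasureTheory intervalIntegral Complex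

/-- Integrand of the Beta integral, cut off to `(0,1]`. -/
noncomputable def pbG (α : ℂ) (k : ℕ) : ℝ → ℂ :=
  Set.indicator (Set.Ioc 0 1)
    (fun u : ℝ => (u : ℂ) ^ ((k + 1 / 2 : ℂ) - 1) * (1 - (u : ℂ)) ^ ((α + 1 / 2) - 1))

/-- The weighted monomial. -/
noncomputable def pbW (α : ℂ) (n : ℕ) : ℝ → ℂ :=
  fun t : ℝ => ((1 - t ^ 2 : ℝ) : ℂ) ^ (α - 1 / 2) * (t : ℂ) ^ n

lemma pb_pointwise (α : ℂ) (k : ℕ) {t : ℝ} (ht : t ∈ Set.Ioi (0 : ℝ)) :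
    ((2 : ℝ) * t ^ ((2 : ℝ) - 1)) • pbG α k (t ^ (2 : ℝ)) =
      Set.indicator (Set.Ioc 0 1) (fun t => 2 * pbW α (2 * k) t) t := by
  have h0 : 0 < t := ht
  have e1 : t ^ ((2 : ℝ) - 1) = t := by norm_num
  have e2 : t ^ (2 : ℝ) = t ^ 2 := by norm_cast
  rw [e1, e2]
  unfold pbG pbW
  by_cases h : t ≤ 1
  · have m1 : t ^ 2 ∈ Set.Ioc (0 : ℝ) 1 := ⟨by positivity, by nlinarith⟩
    have m2 : t ∈ Set.Ioc (0 : ℝ) 1 := ⟨h0, h⟩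
    rw [Set.indicator_of_mem m1, Set.indicator_of_mem m2]
    have htc : (t : ℂ) ≠ 0 := by exact_mod_cast h0.ne'
    have e3 : ((t ^ 2 : ℝ) : ℂ) ^ ((k + 1 / 2 : ℂ) - 1) * t = (t : ℂ) ^ (2 * k) := by
      have : ((t ^ 2 : ℝ) : ℂ) = (t : ℂ) * t := by push_cast; ring
      rw [this, Complex.mul_cpow_ofReal_nonneg h0.le h0.le, ← Complex.cpow_add _ _ htc]
      nth_rewrite 2 [← Complex.cpow_one (t : ℂ)]
      rw [← Complex.cpow_add _ _ htc, ← Complex.cpow_natCast]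
      congr 1
      push_cast; ring
    rw [← e3, Complex.real_smul]
    have : (α + 1 / 2) - 1 = α - 1 / 2 := by ring
    rw [this]
    push_cast
    ring
  · have m1 : t ^ 2 ∉ Set.Ioc (0 : ℝ) 1 := fun hmem => by
      have := hmem.2; nlinarith
    have m2 : t ∉ Set.Ioc (0 : ℝ) 1 := fun hmem => h hmem.2
    rw [Set.indicator_of_notMem m1, Set.indicator_of_notMem m2, smul_zero]

lemma pb_half (α : ℂ) (hα : -(1 / 2) < α.re) (k : ℕ) :
    IntervalIntegrable (pbW α (2 * k)) volume 0 1 ∧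
    2 * ∫ t in (0 : ℝ)..1, pbW α (2 * k) t =
      Complex.Gamma (k + 1 / 2) * Complex.Gamma (α + 1 / 2) / Complex.Gamma (k + α + 1) := by
  have hu : 0 < (k + 1 / 2 : ℂ).re := by
    simp; positivity
  have hv : 0 < (α + 1 / 2 : ℂ).re := by
    simp; linarith
  have hss : Set.Ioi (0 : ℝ) ∩ Set.Ioc 0 1 = Set.Ioc 0 1 := by
    ext x; simp
  constructor
  · have h := Complex.betaIntegral_convergent hu hv
    rw [intervalIntegrable_iff_integrableOn_Ioc_of_le zero_le_one] at h ⊢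
    have h2 : IntegrableOn (pbG α k) (Set.Ioi 0) := by
      unfold pbG
      exact ((integrable_indicator_iff measurableSet_Ioc).2 h).integrableOn
    rw [← integrableOn_Ioi_comp_rpow_iff (pbG α k) (two_ne_zero : (2 : ℝ) ≠ 0)] at h2
    rw [abs_of_pos (zero_lt_two : (0 : ℝ) < 2)] at h2
    have h3 := h2.congr_fun (fun t ht => pb_pointwise α k ht) measurableSet_Ioi
    have h4 := (h3.mono_set (fun x hx => hx.1 : Set.Ioc (0 : ℝ) 1 ⊆ Set.Ioi 0)).congr_fun
      (fun t ht => Set.indicator_of_mem ht _) measurableSet_Ioc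
    have h5 : IntegrableOn (fun x => 1 / 2 * (2 * pbW α (2 * k) x)) (Set.Ioc 0 1) :=
      h4.const_mul (1 / 2)
    refine h5.congr_fun (fun t ht => ?_) measurableSet_Ioc
    simp
  · have h := integral_comp_rpow_Ioi_of_pos (g := pbG α k) (zero_lt_two : (0 : ℝ) < 2)
    rw [setIntegral_congr_fun measurableSet_Ioi (fun t ht => pb_pointwise α k ht),
      setIntegral_indicator measurableSet_Ioc, hss] at h
    unfold pbG at h
    rw [setIntegral_indicator measurableSet_Ioc, hss,
      ← intervalIntegral.integral_of_le zero_le_one,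
      ← intervalIntegral.integral_of_le zero_le_one, intervalIntegral.integral_const_mul] at h
    rw [h]
    have := Complex.betaIntegral_eq_Gamma_mul_div _ _ hu hv
    rw [Complex.betaIntegral] at this
    rw [this]
    congr 2
    ring

lemma pbW_neg (α : ℂ) (n : ℕ) (t : ℝ) : pbW α n (-t) = (-1) ^ n * pbW α n t := by
  unfold pbW
  rw [neg_sq, Complex.ofReal_neg, neg_pow]
  ring

lemma pb_int0 (α : ℂ) (hα : -(1 / 2) < α.re) : IntervalIntegrable (pbW α 0) volume (-1) 1 := by
  have h := (pb_half α hα 0).1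
  refine IntervalIntegrable.trans (b := 0) ?_ h
  rw [IntervalIntegrable.iff_comp_neg]
  simp only [pbW_neg]
  simpa using h.symm

lemma pbW_eq (α : ℂ) (n : ℕ) (t : ℝ) : pbW α n t = pbW α 0 t * (t : ℂ) ^ n := by
  simp [pbW]

lemma pb_int (α : ℂ) (hα : -(1 / 2) < α.re) (n : ℕ) :
    IntervalIntegrable (pbW α n) volume (-1) 1 := by
  have : pbW α n = fun t => pbW α 0 t * (t : ℂ) ^ n := funext (pbW_eq α n)
  rw [this]
  exact (pb_int0 α hα).mul_continuousOn (by fun_prop)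

lemma pb_odd (α : ℂ) (n : ℕ) (hn : Odd n) : ∫ t in (-1 : ℝ)..1, pbW α n t = 0 := by
  have h := intervalIntegral.integral_comp_neg (a := -1) (b := 1) (pbW α n)
  simp only [pbW_neg, hn.neg_one_pow, intervalIntegral.integral_const_mul, neg_neg] at h
  have h2 : (2 : ℂ) * ∫ t in (-1 : ℝ)..1, pbW α n t = 0 := by linear_combination -h
  simpa using h2

lemma pb_even (α : ℂ) (hα : -(1 / 2) < α.re) (k : ℕ) :
    ∫ t in (-1 : ℝ)..1, pbW α (2 * k) t =
      Complex.Gamma (k + 1 / 2) * Complex.Gamma (α + 1 / 2) / Complex.Gamma (k + α + 1) := by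
  rw [← (pb_half α hα k).2]
  have h := intervalIntegral.integral_comp_neg (a := 0) (b := 1) (pbW α (2 * k))
  simp only [pbW_neg, (even_two_mul k).neg_one_pow, one_mul, neg_zero] at h
  have hi := pb_int α hα (2 * k)
  rw [← intervalIntegral.integral_add_adjacent_intervals (b := 0)
    (hi.mono_set (by
      rw [Set.uIcc_of_le (by norm_num), Set.uIcc_of_le (by norm_num)]
      exact Set.Icc_subset_Icc le_rfl zero_le_one)) (pb_half α hα k).1, ← h]
  ring

lemma pb_gamma (k : ℕ) : Complex.Gamma (k + 1 / 2) * (4 ^ k * (k.factorial : ℂ)) =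
    ((2 * k).factorial : ℂ) * Complex.Gamma (1 / 2) := by
  induction k with
  | zero => simp
  | succ k ih =>
    have hne : (k + 1 / 2 : ℂ) ≠ 0 := by
      intro h
      have := congrArg Complex.re h
      simp at this
      have h2 : (0 : ℝ) ≤ k := k.cast_nonneg
      norm_num at this
      linarith
    have e : ((k + 1 : ℕ) + 1 / 2 : ℂ) = (k + 1 / 2) + 1 := by push_cast; ring
    rw [e, Complex.Gamma_add_one _ hne, show 2 * (k + 1) = 2 * k + 1 + 1 by ring,
      Nat.factorial_succ, Nat.factorial_succ, Nat.factorial_succ]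
    push_cast
    linear_combination (4 * (k + 1 / 2 : ℂ) * (k + 1)) * ih

lemma pb_hasSum (α : ℂ) (hα : -(1 / 2) < α.re) (z : ℂ) :
    HasSum (fun n : ℕ => (Complex.I * z) ^ n / (n.factorial : ℂ) * ∫ t in (-1 : ℝ)..1, pbW α n t)
      (∫ t in (-1 : ℝ)..1,
          ((1 - t ^ 2 : ℝ) : ℂ) ^ (α - 1 / 2) * Complex.exp (Complex.I * z * t)) := by
  simp only [← intervalIntegral.integral_const_mul]
  have hs : Summable fun n : ℕ => ‖z‖ ^ n / (n.factorial : ℝ) := Real.summable_pow_div_factorial _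
  refine intervalIntegral.hasSum_integral_of_dominated_convergence
    (fun n t => ‖pbW α 0 t‖ * (‖z‖ ^ n / (n.factorial : ℝ))) ?_ ?_ ?_ ?_ ?_
  · intro n
    exact ((pb_int α hα n).const_mul _).def'.aestronglyMeasurable
  · intro n
    refine Filter.Eventually.of_forall fun t ht => ?_
    rw [Set.uIoc_of_le (by norm_num)] at ht
    have hb : |t| ≤ 1 := abs_le.2 ⟨ht.1.le, ht.2⟩
    rw [pbW_eq]
    simp only [norm_mul, norm_div, norm_pow, Complex.norm_I, one_mul, Complex.norm_natCast,
      Complex.norm_real, Real.norm_eq_abs]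
    have : |t| ^ n ≤ 1 := pow_le_one₀ (abs_nonneg _) hb
    calc _ = (‖pbW α 0 t‖ * (‖z‖ ^ n / (n.factorial : ℝ))) * |t| ^ n := by ring
      _ ≤ _ := mul_le_of_le_one_right (by positivity) this
  · exact Filter.Eventually.of_forall fun t _ => hs.mul_left _
  · simp only [tsum_mul_left]
    exact (pb_int0 α hα).norm.mul_const _
  · refine Filter.Eventually.of_forall fun t _ => ?_
    have h := (NormedSpace.expSeries_div_hasSum_exp (Complex.I * z * t)).mul_left (pbW α 0 t)
    rw [← Complex.exp_eq_exp_ℂ] at h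
    convert! h using 1
    · ext n
      rw [pbW_eq, mul_pow (Complex.I * z)]
      ring
    · simp [pbW]

/-- Poisson's integral representation of the Bessel function of the first kind
`J_α(z) = (z/2)^α ∑_{k} (-1)^k/(Γ(k+1)Γ(k+α+1)) (z/2)^{2k}` for `Re α > -1/2`. -/
theorem poisson_integral_representation_bessel
    (α : ℂ) (hα : -(1 / 2) < α.re)
    (J : ℂ → ℂ)
    (hJ : ∀ z : ℂ, J z = (z / 2) ^ α *
      ∑' k : ℕ, (-1) ^ k /
        (Complex.Gamma (k + 1) * Complex.Gamma (k + α + 1)) * (z / 2) ^ (2 * k)) :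
    ∀ z : ℂ,
      J z = (z / 2) ^ α / (Complex.Gamma (α + 1 / 2) * Complex.Gamma (1 / 2)) *
        ∫ t in (-1 : ℝ)..1,
          ((1 - t ^ 2 : ℝ) : ℂ) ^ (α - 1 / 2) * Complex.exp (Complex.I * z * t) := by
  intro z
  rw [hJ, div_mul_eq_mul_div, mul_div_assoc]
  congr 1
  have h := pb_hasSum α hα z
  have hinj : Function.Injective (fun k : ℕ => 2 * k) := fun a b h => by
    simpa using h
  rw [← hinj.hasSum_iff (fun n hn => by
    have : Odd n := by
      rw [← Nat.not_even_iff_odd]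
      intro he
      obtain ⟨m, rfl⟩ := he.two_dvd
      exact hn ⟨m, rfl⟩
    rw [pb_odd α n this, mul_zero])] at h
  have h2 := h.div_const (Complex.Gamma (α + 1 / 2) * Complex.Gamma (1 / 2))
  rw [← h2.tsum_eq]
  refine tsum_congr fun k => ?_
  simp only [Function.comp]
  rw [pb_even α hα k, Complex.Gamma_nat_eq_factorial]
  have g1 : Complex.Gamma (α + 1 / 2) ≠ 0 :=
    Complex.Gamma_ne_zero_of_re_pos (by simp; linarith)
  have g2 : Complex.Gamma (1 / 2) ≠ 0 :=
    Complex.Gamma_ne_zero_of_re_pos (by simp)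
  have g3 : Complex.Gamma (k + α + 1) ≠ 0 :=
    Complex.Gamma_ne_zero_of_re_pos (by
      have h2 : (0 : ℝ) ≤ k := k.cast_nonneg
      simp; linarith)
  have f1 : (k.factorial : ℂ) ≠ 0 := by exact_mod_cast k.factorial_ne_zero
  have f2 : ((2 * k).factorial : ℂ) ≠ 0 := by exact_mod_cast (2 * k).factorial_ne_zero
  have hg : Complex.Gamma (k + 1 / 2) =
      ((2 * k).factorial : ℂ) * Complex.Gamma (1 / 2) / (4 ^ k * (k.factorial : ℂ)) := by
    rw [eq_div_iff (mul_ne_zero (pow_ne_zero _ (by norm_num)) f1), pb_gamma]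
  have hI : (Complex.I * z) ^ (2 * k) = (-1) ^ k * z ^ (2 * k) := by
    rw [mul_pow, pow_mul, Complex.I_sq]
  have h4 : (z / 2) ^ (2 * k) = z ^ (2 * k) / 4 ^ k := by
    rw [div_pow, pow_mul 2]; norm_num
  rw [hg, hI, h4]
  generalize Complex.Gamma (α + 1 / 2) = A at g1 ⊢
  generalize Complex.Gamma (1 / 2) = B at g2 ⊢
  field_simp
end

section
/- Let φ satisfy the Section 2 assumptions on [-a, b] with a, b > 0. Then as n → ∞, uniformly for z in compact subsets of ℂ \ ((-∞, -1/a] ∪ [1/b, ∞)), ∫_{-a}^{b} φ(t)/(1 - z t) · t^{n+1} dt = (-1)^{n+1} f₁(0)Γ(μ+1)/(1 + a z) · n^{-μ-1} a^{n+μ+2} + f₂(0)Γ(ν+1)/(1 - b z) · n^{-ν-1} b^{n+ν+2} + O(n^{-μ-2} a^n) + O(n^{-ν-2} b^n). -/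
open MeasureTheory intervalIntegral Complex Filter Asymptotics

lemma kernel_bound (n : ℕ) (x : ℝ) (h0 : 0 ≤ x) (h1 : x ≤ 1) :
    |(1 - x) ^ (n + 1) - Real.exp (-(n * x))| ≤ (x + n * x ^ 2) * Real.exp (-(n * x)) := by
  have hE : Real.exp (-(n * x)) * Real.exp x ^ n = 1 := by
    rw [← Real.exp_nat_mul, ← Real.exp_add]; simp
  have hpos := Real.exp_pos (-(n * x))
  have hup : (1 - x) ^ (n + 1) ≤ Real.exp (-(n * x)) := by
    have h2 : (1 - x) ^ n ≤ Real.exp (-x) ^ n :=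
      pow_le_pow_left₀ (by linarith) (by linarith [Real.add_one_le_exp (-x)]) n
    rw [← Real.exp_nat_mul] at h2
    have h3 : (1 - x) ^ (n + 1) ≤ (1 - x) ^ n :=
      pow_le_pow_of_le_one (by linarith) (by linarith) (by omega)
    calc _ ≤ _ := h3
      _ ≤ _ := h2
      _ = _ := by ring_nf
  have hlow : (1 - x - n * x ^ 2) * Real.exp (-(n * x)) ≤ (1 - x) ^ (n + 1) := by
    have hb : 1 + (n : ℝ) * (-x ^ 2) ≤ (1 + (-x ^ 2)) ^ n :=
      one_add_mul_le_pow (by nlinarith) n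
    have hc : (1 + (-x ^ 2)) ^ n ≤ ((1 - x) * Real.exp x) ^ n := by
      apply pow_le_pow_left₀ (by nlinarith)
      nlinarith [Real.add_one_le_exp x]
    have hd : (1 - x - n * x ^ 2) ≤ (1 - x) * ((1 - x) * Real.exp x) ^ n := by
      have : (1 - x) * (1 + (n : ℝ) * (-x ^ 2)) ≤ (1 - x) * ((1 - x) * Real.exp x) ^ n :=
        mul_le_mul_of_nonneg_left (hb.trans hc) (by linarith)
      have h5 : 0 ≤ (n : ℝ) * x ^ 3 := by positivity
      nlinarith
    calc _ ≤ ((1 - x) * ((1 - x) * Real.exp x) ^ n) * Real.exp (-(n * x)) :=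
          mul_le_mul_of_nonneg_right hd hpos.le
      _ = (1 - x) ^ (n + 1) * (Real.exp (-(n * x)) * Real.exp x ^ n) := by
          rw [mul_pow]; ring
      _ = _ := by rw [hE, mul_one]
  rw [abs_le]
  constructor <;> nlinarith [mul_nonneg (by positivity : 0 ≤ x + n * x ^ 2) hpos.le]

lemma kernel_bound_scaled (n : ℕ) (b s : ℝ) (hb : 0 < b) (h0 : 0 ≤ s) (h1 : s ≤ b) :
    |(b - s) ^ (n + 1) - b ^ (n + 1) * Real.exp (-(n / b * s))| ≤
      b ^ (n + 1) * ((s / b + n * (s / b) ^ 2) * Real.exp (-(n / b * s))) := by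
  have h := kernel_bound n (s / b) (by positivity) ((div_le_one hb).2 h1)
  have e1 : (b - s) ^ (n + 1) = b ^ (n + 1) * (1 - s / b) ^ (n + 1) := by
    rw [← mul_pow]; congr 1; field_simp
  have e2 : (n : ℝ) / b * s = n * (s / b) := by ring
  rw [e1, e2, ← mul_sub, abs_mul, abs_of_pos (by positivity : 0 < b ^ (n + 1))]
  exact mul_le_mul_of_nonneg_left h (by positivity)

lemma geom_bound (q : ℝ) (h0 : 0 ≤ q) (h1 : q < 1) (r : ℝ) :
    ∃ C : ℝ, 0 ≤ C ∧ ∀ n : ℕ, 1 ≤ n → q ^ n ≤ C * (n : ℝ) ^ (-r) := by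
  obtain ⟨k, hk⟩ := exists_nat_ge r
  have ht := tendsto_pow_const_mul_const_pow_of_abs_lt_one k (r := q) (by rwa [abs_of_nonneg h0])
  obtain ⟨C, hC⟩ := ht.bddAbove_range
  refine ⟨C, ?_, fun n hn => ?_⟩
  · have := hC ⟨1, rfl⟩
    refine le_trans ?_ this
    simpa using h0
  · have hn' : (1 : ℝ) ≤ n := by exact_mod_cast hn
    have h2 := hC ⟨n, rfl⟩
    simp only at h2
    have h3 : (n : ℝ) ^ r ≤ (n : ℝ) ^ k := by
      rw [← Real.rpow_natCast]; exact Real.rpow_le_rpow_of_exponent_le hn' hk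
    rw [Real.rpow_neg (by linarith), ← div_eq_mul_inv, le_div_iff₀ (by positivity), mul_comm]
    exact (mul_le_mul_of_nonneg_right h3 (by positivity)).trans h2

lemma real_int (p c : ℝ) (hp : -1 < p) (hc : 0 < c) :
    IntegrableOn (fun s : ℝ => s ^ p * Real.exp (-(c * s))) (Set.Ioi 0) := by
  have := integrableOn_rpow_mul_exp_neg_mul_rpow (p := 1) (s := p) (b := c) hp one_pos hc
  simpa using this

lemma cplx_int (ν : ℂ) (c : ℝ) (hp : -1 < ν.re) (hc : 0 < c) :
    IntegrableOn (fun s : ℝ => (s : ℂ) ^ ν * Complex.exp (-(c * s))) (Set.Ioi 0) := by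
  refine (real_int ν.re c hp hc).mono' ?_ ?_
  · apply ContinuousOn.aestronglyMeasurable _ measurableSet_Ioi
    intro s hs
    apply ContinuousAt.continuousWithinAt
    have hs' : (0 : ℝ) < s := hs
    refine ContinuousAt.mul ?_ (by fun_prop)
    exact (Complex.continuousAt_ofReal_cpow_const s ν (Or.inr hs'.ne'))
  · refine (ae_restrict_iff' measurableSet_Ioi).2 (ae_of_all _ fun s hs => ?_)
    have hs' : (0 : ℝ) < s := hs
    rw [norm_mul, Complex.norm_cpow_eq_rpow_re_of_pos hs', Complex.norm_exp]
    simp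

lemma main_integral (b : ℝ) (hb : 0 < b) (ν : ℂ) (hν : -1 < ν.re) (n : ℕ) (hn : 1 ≤ n) :
    ∫ s in Set.Ioi (0 : ℝ), (b : ℂ) ^ (n + 1) * ((s : ℂ) ^ ν * Complex.exp (-(((n / b : ℝ) : ℂ) * s))) =
      Complex.Gamma (ν + 1) * (n : ℂ) ^ (-ν - 1) * (b : ℂ) ^ ((n : ℂ) + ν + 2) := by
  have hn' : (0 : ℝ) < n := by exact_mod_cast hn
  have h := Complex.integral_cpow_mul_exp_neg_mul_Ioi (a := ν + 1) (r := n / b)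
    (by simp; linarith) (by positivity)
  rw [MeasureTheory.integral_const_mul]
  simp only [add_sub_cancel_right] at h
  rw [h]
  have hbc : (b : ℂ) ≠ 0 := by exact_mod_cast hb.ne'
  have e1 : (1 / ((n / b : ℝ) : ℂ)) ^ (ν + 1) = (b : ℂ) ^ (ν + 1) * (n : ℂ) ^ (-ν - 1) := by
    have : (1 / ((n / b : ℝ) : ℂ)) = (b : ℝ) * ((n : ℝ)⁻¹ : ℝ) := by
      push_cast; field_simp
    rw [this, Complex.mul_cpow_ofReal_nonneg hb.le (by positivity)]
    congr 1
    rw [Complex.ofReal_inv, Complex.ofReal_natCast, Complex.inv_cpow, ← Complex.cpow_neg]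
    · congr 1; ring
    · rw [Complex.natCast_arg]; exact Real.pi_pos.ne
  have e2 : (b : ℂ) ^ ((n : ℂ) + ν + 2) = (b : ℂ) ^ (n + 1) * (b : ℂ) ^ (ν + 1) := by
    rw [← Complex.cpow_natCast, ← Complex.cpow_add _ _ hbc]; congr 1; push_cast; ring
  rw [e1, e2]; ring

lemma real_integral (b : ℝ) (hb : 0 < b) (p : ℝ) (hp : 0 < p) (n : ℕ) (hn : 1 ≤ n) :
    ∫ s in Set.Ioi (0 : ℝ), s ^ (p - 1) * Real.exp (-(n / b * s)) =
      (n : ℝ) ^ (-p) * (b ^ p * Real.Gamma p) := by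
  have hn' : (0 : ℝ) < n := by exact_mod_cast hn
  rw [Real.integral_rpow_mul_exp_neg_mul_Ioi hp (by positivity), one_div_div,
    Real.div_rpow hb.le hn'.le, Real.rpow_neg hn'.le]
  ring

lemma kernel_le (n : ℕ) (b s : ℝ) (hb : 0 < b) (h1 : s ≤ b) (h0 : 0 ≤ s) :
    (b - s) ^ (n + 1) ≤ b ^ (n + 1) * Real.exp (-(n / b * s)) := by
  have h2 : (b - s) ^ n ≤ (b * Real.exp (-(s / b))) ^ n := by
    apply pow_le_pow_left₀ (by linarith)
    have h4 : b - s = b * (-(s / b) + 1) := by field_simp; ring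
    rw [h4]
    exact mul_le_mul_of_nonneg_left (Real.add_one_le_exp _) hb.le
  rw [mul_pow, ← Real.exp_nat_mul] at h2
  have e : (n : ℝ) * -(s / b) = -(n / b * s) := by ring
  rw [e] at h2
  calc (b - s) ^ (n + 1) = (b - s) ^ n * (b - s) := pow_succ _ _
    _ ≤ (b ^ n * Real.exp (-(n / b * s))) * b :=
        mul_le_mul h2 (by linarith) (by linarith) (by positivity)
    _ = _ := by ring

lemma quot_bound (M Q R s : ℝ) (w f0 fs D0 Ds : ℂ) (hQ : 0 ≤ Q) (hs : 0 ≤ s)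
    (hw : ‖w‖ ≤ R) (hM : ‖fs - f0‖ ≤ M * s) (hD0 : D0 ≠ 0) (hDs : Ds ≠ 0)
    (hQ0 : ‖D0⁻¹‖ ≤ Q) (hQs : ‖Ds⁻¹‖ ≤ Q) (hdiff : D0 - Ds = -(w * s)) :
    ‖fs * Ds⁻¹ - f0 * D0⁻¹‖ ≤ (M * Q + ‖f0‖ * R * Q ^ 2) * s := by
  have e : fs * Ds⁻¹ - f0 * D0⁻¹ = (fs - f0) * Ds⁻¹ + f0 * ((D0 - Ds) * (D0⁻¹ * Ds⁻¹)) := by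
    field_simp; ring
  have hR : 0 ≤ R := (norm_nonneg _).trans hw
  rw [e, hdiff]
  calc _ ≤ ‖fs - f0‖ * ‖Ds⁻¹‖ + ‖f0‖ * ((‖w‖ * s) * (‖D0⁻¹‖ * ‖Ds⁻¹‖)) := by
        refine (norm_add_le _ _).trans ?_
        simp only [norm_mul, norm_neg, Complex.norm_real, Real.norm_eq_abs, abs_of_nonneg hs]
        exact le_rfl
    _ ≤ (M * s) * Q + ‖f0‖ * ((R * s) * (Q * Q)) := by
        have := (norm_nonneg _).trans hM
        gcongr
    _ = _ := by ring

lemma pointwise_bound (b : ℝ) (hb : 0 < b) (ν : ℂ) (g f : ℝ → ℂ)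
    (hg : ∀ s ∈ Set.Icc (0 : ℝ) b, g s = (s : ℂ) ^ ν * f s)
    (M Q R d : ℝ) (hd : 0 < d) (hdb : d ≤ b) (hQ : 0 ≤ Q) (hM : 0 ≤ M)
    (hfM : ∀ s ∈ Set.Icc (0 : ℝ) d, ‖f s - f 0‖ ≤ M * s)
    (z : ℂ) (hz : ‖z‖ ≤ R)
    (hD : ∀ s ∈ Set.Icc (0 : ℝ) b, 1 - z * ((b - s : ℝ) : ℂ) ≠ 0)
    (hDQ : ∀ s ∈ Set.Icc (0 : ℝ) b, ‖(1 - z * ((b - s : ℝ) : ℂ))⁻¹‖ ≤ Q)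
    (n : ℕ) (s : ℝ) (hs : 0 < s) :
    ‖(Set.Ioc 0 b).indicator
        (fun s : ℝ => g s / (1 - z * ((b - s : ℝ) : ℂ)) * ((b - s : ℝ) : ℂ) ^ (n + 1)) s
      - f 0 / (1 - b * z) * ((b : ℂ) ^ (n + 1) *
        ((s : ℂ) ^ ν * Complex.exp (-(((n / b : ℝ) : ℂ) * s))))‖ ≤
      b ^ (n + 1) * ((M * Q + ‖f 0‖ * R * Q ^ 2 + ‖f 0‖ * Q / b + ‖f 0‖ * Q / d) *
          (s ^ (ν.re + 2 - 1) * Real.exp (-(n / b * s)))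
        + ‖f 0‖ * Q / b ^ 2 * (n * (s ^ (ν.re + 3 - 1) * Real.exp (-(n / b * s)))))
      + Q * (b - d) ^ (n + 1) * (Set.Ioc 0 b).indicator (fun s => ‖g s‖) s := by
  have hR : 0 ≤ R := (norm_nonneg _).trans hz
  have e1 : s ^ (ν.re + 2 - 1) = s ^ ν.re * s := by
    rw [← Real.rpow_add_one hs.ne']; congr 1; ring
  have e2 : s ^ (ν.re + 3 - 1) = s ^ ν.re * s ^ 2 := by
    rw [← Real.rpow_natCast s 2, ← Real.rpow_add hs]; congr 1; push_cast; ring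
  have hD0 : (1 - (b : ℂ) * z) = 1 - z * ((b - 0 : ℝ) : ℂ) := by push_cast; ring
  have m0 : (0 : ℝ) ∈ Set.Icc (0 : ℝ) b := ⟨le_rfl, hb.le⟩
  have hQ0 := hDQ 0 m0
  have hN0 := hD 0 m0
  rw [← hD0] at hQ0 hN0
  have hH : ‖f 0 / (1 - (b : ℂ) * z)‖ ≤ ‖f 0‖ * Q := by
    rw [div_eq_mul_inv, norm_mul]; gcongr
  have hEn : Complex.exp (-(((n / b : ℝ) : ℂ) * s)) = ((Real.exp (-(n / b * s)) : ℝ) : ℂ) := by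
    push_cast; rfl
  rw [e1, e2, hEn]
  set E := Real.exp (-(n / b * s)) with hE
  have hEpos : 0 < E := Real.exp_pos _
  have hpow : ‖(s : ℂ) ^ ν‖ = s ^ ν.re := Complex.norm_cpow_eq_rpow_re_of_pos hs ν
  have hsr : 0 < s ^ ν.re := Real.rpow_pos_of_pos hs _
  have hI : 0 ≤ (Set.Ioc 0 b).indicator (fun s => ‖g s‖) s :=
    Set.indicator_nonneg (fun _ _ => norm_nonneg _) _
  have hbd : 0 ≤ (b - d) ^ (n + 1) := pow_nonneg (by linarith) _
  rcases le_or_gt s d with hsd | hsd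
  · have hsb : s ≤ b := hsd.trans hdb
    have hms : s ∈ Set.Icc (0 : ℝ) b := ⟨hs.le, hsb⟩
    rw [Set.indicator_of_mem (show s ∈ Set.Ioc 0 b from ⟨hs, hsb⟩), hg s hms]
    have hq := quot_bound M Q R s z (f 0) (f s) (1 - (b : ℂ) * z) (1 - z * ((b - s : ℝ) : ℂ))
      hQ hs.le hz (hfM s ⟨hs.le, hsd⟩) hN0 (hD s hms) hQ0 (hDQ s hms) (by push_cast; ring)
    have hk := kernel_bound_scaled n b s hb hs.le hsb
    have hk2 := kernel_le n b s hb hsb hs.le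
    have e3 : (s : ℂ) ^ ν * f s / (1 - z * ((b - s : ℝ) : ℂ)) * ((b - s : ℝ) : ℂ) ^ (n + 1)
        - f 0 / (1 - b * z) * ((b : ℂ) ^ (n + 1) * ((s : ℂ) ^ ν * (E : ℂ))) =
        (s : ℂ) ^ ν * ((f s * (1 - z * ((b - s : ℝ) : ℂ))⁻¹ - f 0 * (1 - (b : ℂ) * z)⁻¹) *
          (((b - s) ^ (n + 1) : ℝ) : ℂ) + f 0 / (1 - (b : ℂ) * z) *
          (((b - s) ^ (n + 1) - b ^ (n + 1) * E : ℝ) : ℂ)) := by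
      push_cast; ring
    rw [e3, norm_mul, hpow]
    have hbs : 0 ≤ (b - s) ^ (n + 1) := pow_nonneg (by linarith) _
    calc _ ≤ s ^ ν.re * (((M * Q + ‖f 0‖ * R * Q ^ 2) * s) * (b ^ (n + 1) * E) +
          (‖f 0‖ * Q) * (b ^ (n + 1) * ((s / b + n * (s / b) ^ 2) * E))) := by
          refine mul_le_mul_of_nonneg_left ((norm_add_le _ _).trans ?_) hsr.le
          rw [norm_mul, norm_mul, Complex.norm_real, Complex.norm_real, Real.norm_eq_abs,
            Real.norm_eq_abs, abs_of_nonneg hbs]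
          gcongr
      _ = b ^ (n + 1) * ((M * Q + ‖f 0‖ * R * Q ^ 2 + ‖f 0‖ * Q / b) * (s ^ ν.re * s * E)
          + ‖f 0‖ * Q / b ^ 2 * (n * (s ^ ν.re * s ^ 2 * E))) := by
          field_simp
          ring
      _ ≤ b ^ (n + 1) * ((M * Q + ‖f 0‖ * R * Q ^ 2 + ‖f 0‖ * Q / b + ‖f 0‖ * Q / d) *
          (s ^ ν.re * s * E)
          + ‖f 0‖ * Q / b ^ 2 * (n * (s ^ ν.re * s ^ 2 * E))) := by
          refine mul_le_mul_of_nonneg_left (add_le_add (mul_le_mul_of_nonneg_right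
            (le_add_of_nonneg_right (by positivity)) (by positivity)) le_rfl) (by positivity)
      _ ≤ _ := le_add_of_nonneg_right (by positivity)
  · have hfirst : ‖(Set.Ioc 0 b).indicator
        (fun s : ℝ => g s / (1 - z * ((b - s : ℝ) : ℂ)) * ((b - s : ℝ) : ℂ) ^ (n + 1)) s‖ ≤
        Q * (b - d) ^ (n + 1) * (Set.Ioc 0 b).indicator (fun s => ‖g s‖) s := by
      by_cases hm : s ∈ Set.Ioc 0 b
      · rw [Set.indicator_of_mem hm, Set.indicator_of_mem hm, div_eq_mul_inv, norm_mul, norm_mul,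
          norm_pow, Complex.norm_real, Real.norm_eq_abs, abs_of_nonneg (sub_nonneg.2 hm.2)]
        have h1 := hDQ s ⟨hs.le, hm.2⟩
        have h2 : (b - s) ^ (n + 1) ≤ (b - d) ^ (n + 1) :=
          pow_le_pow_left₀ (sub_nonneg.2 hm.2) (by linarith) _
        have h3 : 0 ≤ (b - s) ^ (n + 1) := pow_nonneg (sub_nonneg.2 hm.2) _
        calc _ ≤ ‖g s‖ * Q * (b - d) ^ (n + 1) := by gcongr
          _ = _ := by ring
      · rw [Set.indicator_of_notMem hm, Set.indicator_of_notMem hm]; simp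
    have hsecond : ‖f 0 / (1 - b * z) * ((b : ℂ) ^ (n + 1) * ((s : ℂ) ^ ν * (E : ℂ)))‖ ≤
        b ^ (n + 1) * ((‖f 0‖ * Q / d) * (s ^ ν.re * s * E)) := by
      rw [norm_mul, norm_mul, norm_mul, hpow, norm_pow, Complex.norm_real, Complex.norm_real,
        Real.norm_eq_abs, Real.norm_eq_abs, abs_of_pos hb, abs_of_pos hEpos]
      have h1 : 1 ≤ s / d := (one_le_div hd).2 hsd.le
      calc _ ≤ (‖f 0‖ * Q) * (b ^ (n + 1) * (s ^ ν.re * E)) * 1 := by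
            rw [mul_one]; gcongr
        _ ≤ (‖f 0‖ * Q) * (b ^ (n + 1) * (s ^ ν.re * E)) * (s / d) := by gcongr
        _ = _ := by ring
    refine (norm_sub_le _ _).trans ?_
    rw [add_comm]
    refine add_le_add (hsecond.trans ?_) hfirst
    gcongr
    have h1 : ‖f 0‖ * Q / d ≤ M * Q + ‖f 0‖ * R * Q ^ 2 + ‖f 0‖ * Q / b + ‖f 0‖ * Q / d :=
      le_add_of_nonneg_left (by positivity)
    calc _ ≤ (M * Q + ‖f 0‖ * R * Q ^ 2 + ‖f 0‖ * Q / b + ‖f 0‖ * Q / d) * (s ^ ν.re * s * E) := by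
          gcongr
      _ ≤ _ := le_add_of_nonneg_right (by positivity)

lemma one_side (b : ℝ) (hb : 0 < b) (ν : ℂ) (hν : -1 < ν.re) (g f : ℝ → ℂ)
    (hint : IntervalIntegrable g volume 0 b)
    (hg : ∀ s ∈ Set.Icc (0 : ℝ) b, g s = (s : ℂ) ^ ν * f s)
    (hf : ∃ δ > (0 : ℝ), (∀ t ∈ Set.Icc (0 : ℝ) δ, DifferentiableAt ℝ f t) ∧
          ∃ M : ℝ, ∀ t ∈ Set.Icc (0 : ℝ) δ, ‖deriv f t‖ ≤ M)
    (K : Set ℂ) (hK : IsCompact K)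
    (hD : ∀ z ∈ K, ∀ s ∈ Set.Icc (0 : ℝ) b, 1 - z * ((b - s : ℝ) : ℂ) ≠ 0) :
    ∃ C : ℝ, 0 ≤ C ∧ ∀ n : ℕ, 1 ≤ n → ∀ z ∈ K,
      ‖(∫ s in (0 : ℝ)..b, g s / (1 - z * ((b - s : ℝ) : ℂ)) * ((b - s : ℝ) : ℂ) ^ (n + 1)) -
        f 0 * Complex.Gamma (ν + 1) / (1 - b * z) *
              (n : ℂ) ^ (-ν - 1) * (b : ℂ) ^ ((n : ℂ) + ν + 2)‖
        ≤ C * (‖((n : ℂ) ^ (-ν - 2))‖ * b ^ n) := by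
  obtain ⟨δ, hδ, hdiff, M, hM⟩ := hf
  have hM0 : 0 ≤ M := (norm_nonneg _).trans (hM 0 ⟨le_rfl, hδ.le⟩)
  obtain ⟨R, hR⟩ := hK.exists_bound_of_continuousOn (f := fun z : ℂ => z) continuousOn_id
  have hcont : ContinuousOn (fun p : ℂ × ℝ => (1 - p.1 * ((b - p.2 : ℝ) : ℂ))⁻¹)
      (K ×ˢ Set.Icc (0 : ℝ) b) := by
    apply ContinuousOn.inv₀
    · fun_prop
    · rintro ⟨z, s⟩ ⟨hz, hs⟩; exact hD z hz s hs
  obtain ⟨Q', hQ'⟩ := (hK.prod isCompact_Icc).exists_bound_of_continuousOn hcont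
  set Q := max Q' 0
  have hQ : 0 ≤ Q := le_max_right _ _
  set d := min δ (b / 2) with hd_def
  have hd : 0 < d := lt_min hδ (by linarith)
  have hdb : d < b := (min_le_right _ _).trans_lt (by linarith)
  have hfM : ∀ s ∈ Set.Icc (0 : ℝ) d, ‖f s - f 0‖ ≤ M * s := by
    intro s hs
    have hsub : Set.Icc (0 : ℝ) d ⊆ Set.Icc 0 δ := Set.Icc_subset_Icc_right (min_le_left _ _)
    have := norm_image_sub_le_of_norm_deriv_le_segment' (f := f) (f' := deriv f) (C := M)
      (a := 0) (b := d) (fun x hx => (hdiff x (hsub hx)).hasDerivAt.hasDerivWithinAt)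
      (fun x hx => hM x (hsub (Set.Ico_subset_Icc_self hx))) s hs
    simpa using this
  obtain ⟨G, hG0, hG⟩ := geom_bound (1 - d / b) (sub_nonneg.2 ((div_le_one hb).2 hdb.le))
    (by have : 0 < d / b := by positivity
        linarith) (ν.re + 2)
  have hgi : IntegrableOn g (Set.Ioc 0 b) := (intervalIntegrable_iff_integrableOn_Ioc_of_le hb.le).1 hint
  set J := ∫ s in Set.Ioc 0 b, ‖g s‖ with hJ
  have hJ0 : 0 ≤ J := integral_nonneg fun _ => norm_nonneg _
  set A := M * Q + ‖f 0‖ * |R| * Q ^ 2 + ‖f 0‖ * Q / b + ‖f 0‖ * Q / d with hA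
  set B := ‖f 0‖ * Q / b ^ 2 with hB
  have hA0 : 0 ≤ A := by positivity
  have hB0 : 0 ≤ B := by positivity
  have hΓ2 : 0 < Real.Gamma (ν.re + 2) := Real.Gamma_pos_of_pos (by linarith)
  have hΓ3 : 0 < Real.Gamma (ν.re + 3) := Real.Gamma_pos_of_pos (by linarith)
  refine ⟨b * (A * (b ^ (ν.re + 2) * Real.Gamma (ν.re + 2)) +
    B * (b ^ (ν.re + 3) * Real.Gamma (ν.re + 3))) + Q * b * G * J, by positivity, ?_⟩
  intro n hn z hz
  have hn' : (0 : ℝ) < n := by exact_mod_cast hn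
  have hzR : ‖z‖ ≤ |R| := (hR z hz).trans (le_abs_self R)
  have hDQ : ∀ s ∈ Set.Icc (0 : ℝ) b, ‖(1 - z * ((b - s : ℝ) : ℂ))⁻¹‖ ≤ Q := fun s hs =>
    (hQ' (z, s) ⟨hz, hs⟩).trans (le_max_left _ _)
  have hpt := pointwise_bound b hb ν g f hg M Q |R| d hd hdb.le hQ hM0 hfM z hzR (hD z hz) hDQ n
  rw [← hA, ← hB] at hpt
  have hnb : (0 : ℝ) < n / b := by positivity
  -- integrability of the main integrand
  have hFi : IntegrableOn (fun s : ℝ => g s / (1 - z * ((b - s : ℝ) : ℂ)) *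
      ((b - s : ℝ) : ℂ) ^ (n + 1)) (Set.Ioc 0 b) := by
    have hi : IntervalIntegrable (fun s : ℝ => g s * ((1 - z * ((b - s : ℝ) : ℂ))⁻¹ *
      ((b - s : ℝ) : ℂ) ^ (n + 1))) volume 0 b := by
      apply hint.mul_continuousOn
      rw [Set.uIcc_of_le hb.le]
      apply ContinuousOn.mul
      · apply ContinuousOn.inv₀
        · fun_prop
        · exact hD z hz
      · fun_prop
    refine ((intervalIntegrable_iff_integrableOn_Ioc_of_le hb.le).1 hi).congr_fun ?_ measurableSet_Ioc
    intro s _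
    simp only [div_eq_mul_inv, mul_assoc]
  have hsubset : Set.Ioi (0 : ℝ) ∩ Set.Ioc 0 b = Set.Ioc 0 b :=
    Set.inter_eq_right.2 fun s hs => hs.1
  have hFi' : IntegrableOn ((Set.Ioc 0 b).indicator (fun s : ℝ => g s /
      (1 - z * ((b - s : ℝ) : ℂ)) * ((b - s : ℝ) : ℂ) ^ (n + 1))) (Set.Ioi 0) :=
    ((integrable_indicator_iff measurableSet_Ioc).2 hFi).integrableOn
  have hEi := ((cplx_int ν (n / b) hν hnb).const_mul ((b : ℂ) ^ (n + 1))).const_mul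
    (f 0 / (1 - b * z))
  have hlhs : (∫ s in (0 : ℝ)..b, g s / (1 - z * ((b - s : ℝ) : ℂ)) * ((b - s : ℝ) : ℂ) ^ (n + 1)) -
        f 0 * Complex.Gamma (ν + 1) / (1 - b * z) *
              (n : ℂ) ^ (-ν - 1) * (b : ℂ) ^ ((n : ℂ) + ν + 2) =
      ∫ s in Set.Ioi (0 : ℝ), ((Set.Ioc 0 b).indicator
        (fun s : ℝ => g s / (1 - z * ((b - s : ℝ) : ℂ)) * ((b - s : ℝ) : ℂ) ^ (n + 1)) s
      - f 0 / (1 - b * z) * ((b : ℂ) ^ (n + 1) *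
        ((s : ℂ) ^ ν * Complex.exp (-(((n / b : ℝ) : ℂ) * s))))) := by
    rw [integral_sub hFi' hEi, setIntegral_indicator measurableSet_Ioc, hsubset,
      MeasureTheory.integral_const_mul, main_integral b hb ν hν n hn,
      intervalIntegral.integral_of_le hb.le]
    ring
  rw [hlhs]
  have i1 := real_int (ν.re + 2 - 1) (n / b) (by linarith) hnb
  have i2 := real_int (ν.re + 3 - 1) (n / b) (by linarith) hnb
  have i3 : IntegrableOn ((Set.Ioc 0 b).indicator (fun s => ‖g s‖)) (Set.Ioi 0) :=
    ((integrable_indicator_iff measurableSet_Ioc).2 hgi.norm).integrableOn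
  have j12 := (((i1.const_mul A).add ((i2.const_mul (n : ℝ)).const_mul B)).const_mul (b ^ (n + 1)))
  simp only [Pi.add_apply] at j12
  have j3 := i3.const_mul (Q * (b - d) ^ (n + 1))
  have hle := norm_integral_le_of_norm_le (j12.add j3)
    ((ae_restrict_iff' measurableSet_Ioi).2 (ae_of_all _ fun s hs => hpt s hs))
  refine hle.trans ?_
  simp only [Pi.add_apply]
  have hval : ∫ s in Set.Ioi (0 : ℝ), (b ^ (n + 1) * (A *
          (s ^ (ν.re + 2 - 1) * Real.exp (-(n / b * s)))
        + B * (n * (s ^ (ν.re + 3 - 1) * Real.exp (-(n / b * s)))))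
      + Q * (b - d) ^ (n + 1) * (Set.Ioc 0 b).indicator (fun s => ‖g s‖) s) =
      b ^ (n + 1) * (A * ((n : ℝ) ^ (-(ν.re + 2)) * (b ^ (ν.re + 2) * Real.Gamma (ν.re + 2)))
        + B * (n * ((n : ℝ) ^ (-(ν.re + 3)) * (b ^ (ν.re + 3) * Real.Gamma (ν.re + 3)))))
        + Q * (b - d) ^ (n + 1) * J := by
    rw [integral_add j12 j3, MeasureTheory.integral_const_mul, MeasureTheory.integral_const_mul,
      integral_add (i1.const_mul A) ((i2.const_mul (n : ℝ)).const_mul B),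
      MeasureTheory.integral_const_mul, MeasureTheory.integral_const_mul,
      MeasureTheory.integral_const_mul,
      real_integral b hb _ (by linarith) n hn, real_integral b hb _ (by linarith) n hn,
      setIntegral_indicator measurableSet_Ioc, hsubset]
  rw [hval]
  have hnorm : ‖((n : ℂ) ^ (-ν - 2))‖ = (n : ℝ) ^ (-(ν.re + 2)) := by
    rw [Complex.norm_natCast_cpow_of_pos hn]; congr 1; simp; ring
  have hn3 : (n : ℝ) * (n : ℝ) ^ (-(ν.re + 3)) = (n : ℝ) ^ (-(ν.re + 2)) := by
    rw [mul_comm, ← Real.rpow_add_one hn'.ne']; congr 1; ring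
  rw [hnorm]
  have hgeo : (b - d) ^ (n + 1) ≤ b * (b ^ n * (G * (n : ℝ) ^ (-(ν.re + 2)))) := by
    have e : (b - d) ^ n = b ^ n * (1 - d / b) ^ n := by
      rw [← mul_pow]; congr 1; field_simp
    rw [pow_succ, mul_comm, e]
    have := hG n hn
    have h0 : 0 ≤ (1 - d / b) ^ n := pow_nonneg (sub_nonneg.2 ((div_le_one hb).2 hdb.le)) _
    gcongr
    linarith
  have hn3' : (n : ℝ) * ((n : ℝ) ^ (-(ν.re + 3)) * (b ^ (ν.re + 3) * Real.Gamma (ν.re + 3))) =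
      (n : ℝ) ^ (-(ν.re + 2)) * (b ^ (ν.re + 3) * Real.Gamma (ν.re + 3)) := by
    rw [← mul_assoc, hn3]
  rw [hn3']
  calc _ ≤ b ^ (n + 1) * (A * ((n : ℝ) ^ (-(ν.re + 2)) * (b ^ (ν.re + 2) * Real.Gamma (ν.re + 2)))
        + B * ((n : ℝ) ^ (-(ν.re + 2)) * (b ^ (ν.re + 3) * Real.Gamma (ν.re + 3))))
        + Q * (b * (b ^ n * (G * (n : ℝ) ^ (-(ν.re + 2))))) * J := by gcongr
    _ = _ := by ring

/-- Asymptotics of the tail integrals `∫ φ(t) t^{n+1}/(1-zt) dt`, uniformly on compact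
subsets of the doubly-slit plane `ℂ \ ((-∞,-1/a] ∪ [1/b,∞))`. -/
theorem tail_integral_asymptotics
    (a b : ℝ) (ha : 0 < a) (hb : 0 < b)
    (μ ν : ℂ) (hμ : -1 < μ.re) (hν : -1 < ν.re)
    (φ f₁ f₂ : ℝ → ℂ)
    (hint : IntervalIntegrable φ volume (-a) b)
    (hφ₁ : ∀ t ∈ Set.Icc (-a) b, φ t = ((t + a : ℝ) : ℂ) ^ μ * f₁ (t + a))
    (hφ₂ : ∀ t ∈ Set.Icc (-a) b, φ t = ((b - t : ℝ) : ℂ) ^ ν * f₂ (b - t))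
    (hf₁0 : f₁ 0 ≠ 0) (hf₂0 : f₂ 0 ≠ 0)
    (hf₁ : ∃ δ > (0 : ℝ), (∀ t ∈ Set.Icc (0 : ℝ) δ, DifferentiableAt ℝ f₁ t) ∧
          ∃ M : ℝ, ∀ t ∈ Set.Icc (0 : ℝ) δ, ‖deriv f₁ t‖ ≤ M)
    (hf₂ : ∃ δ > (0 : ℝ), (∀ t ∈ Set.Icc (0 : ℝ) δ, DifferentiableAt ℝ f₂ t) ∧
          ∃ M : ℝ, ∀ t ∈ Set.Icc (0 : ℝ) δ, ‖deriv f₂ t‖ ≤ M)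
    (K : Set ℂ) (hK : IsCompact K)
    (hKslit : K ⊆ {z : ℂ | ¬(z.im = 0 ∧ (z.re ≤ -(1 / a) ∨ 1 / b ≤ z.re))}) :
    ∃ C : ℝ, ∃ N : ℕ, ∀ n ≥ N, ∀ z ∈ K,
      ‖(∫ t in (-a)..b, φ t / (1 - z * t) * (t : ℂ) ^ (n + 1)) -
          ((-1) ^ (n + 1) * f₁ 0 * Complex.Gamma (μ + 1) / (1 + a * z) *
              (n : ℂ) ^ (-μ - 1) * (a : ℂ) ^ ((n : ℂ) + μ + 2) +
            f₂ 0 * Complex.Gamma (ν + 1) / (1 - b * z) *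
              (n : ℂ) ^ (-ν - 1) * (b : ℂ) ^ ((n : ℂ) + ν + 2))‖
        ≤ C * (‖((n : ℂ) ^ (-μ - 2))‖ * a ^ n + ‖((n : ℂ) ^ (-ν - 2))‖ * b ^ n) := by
  have hab : (-a) ≤ b := by linarith
  have hi1 : IntervalIntegrable φ volume (-a) 0 := hint.mono_set (by
    rw [Set.uIcc_of_le hab, Set.uIcc_of_le (by linarith)]; exact Set.Icc_subset_Icc_right hb.le)
  have hi2 : IntervalIntegrable φ volume 0 b := hint.mono_set (by
    rw [Set.uIcc_of_le hab, Set.uIcc_of_le hb.le]; exact Set.Icc_subset_Icc_left (by linarith))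
  have hne : ∀ z ∈ K, ∀ t ∈ Set.Icc (-a) b, 1 - z * ((t : ℝ) : ℂ) ≠ 0 := by
    intro z hz t ht h
    apply hKslit hz
    have h1 : z * (t : ℂ) = 1 := (sub_eq_zero.1 h).symm
    have ht0 : t ≠ 0 := by rintro rfl; simp at h1
    have hzt : z = ((t⁻¹ : ℝ) : ℂ) := by
      rw [Complex.ofReal_inv]
      exact eq_inv_of_mul_eq_one_left h1
    rw [hzt]
    refine ⟨Complex.ofReal_im _, ?_⟩
    rw [Complex.ofReal_re]
    rcases lt_or_gt_of_ne ht0 with h2 | h2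
    · left
      have := one_div_le_one_div_of_le (neg_pos.2 h2) (by linarith [ht.1] : -t ≤ a)
      rw [one_div, one_div, inv_neg] at this
      rw [one_div]; linarith
    · right
      rw [← one_div]
      exact one_div_le_one_div_of_le h2 ht.2
  obtain ⟨C₂, hC₂, H₂⟩ := one_side b hb ν hν (fun s => φ (b - s)) f₂
    (by simpa using (hi2.comp_sub_left b).symm)
    (fun s hs => by
      have := hφ₂ (b - s) ⟨by linarith [hs.2], by linarith [hs.1]⟩
      simpa using this) hf₂ K hK
    (fun z hz s hs => hne z hz (b - s) ⟨by linarith [hs.2], by linarith [hs.1]⟩)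
  obtain ⟨C₁, hC₁, H₁⟩ := one_side a ha μ hμ (fun s => φ (s - a)) f₁
    (by simpa using hi1.comp_sub_right a)
    (fun s hs => by
      have := hφ₁ (s - a) ⟨by linarith [hs.1], by linarith [hs.2]⟩
      simpa using this) hf₁ ((fun z => -z) '' K) (hK.image continuous_neg)
    (by
      rintro _ ⟨z, hz, rfl⟩ s hs
      have := hne z hz (s - a) ⟨by linarith [hs.1], by linarith [hs.2]⟩
      intro h
      apply this
      rw [← h]; push_cast; ring)
  refine ⟨C₁ + C₂, 1, fun n hn z hz => ?_⟩
  have h2 := H₂ n hn z hz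
  have h1 := H₁ n hn (-z) ⟨z, hz, rfl⟩
  have hFi : IntervalIntegrable (fun t : ℝ => φ t / (1 - z * t) * (t : ℂ) ^ (n + 1))
      volume (-a) b := by
    have hi : IntervalIntegrable (fun t : ℝ => φ t * ((1 - z * t)⁻¹ * (t : ℂ) ^ (n + 1)))
        volume (-a) b := by
      apply hint.mul_continuousOn
      rw [Set.uIcc_of_le hab]
      apply ContinuousOn.mul
      · apply ContinuousOn.inv₀
        · fun_prop
        · exact hne z hz
      · fun_prop
    simpa only [div_eq_mul_inv, mul_assoc] using hi
  have hFi1 := hFi.mono_set (c := -a) (d := 0) (by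
    rw [Set.uIcc_of_le hab, Set.uIcc_of_le (by linarith)]; exact Set.Icc_subset_Icc_right hb.le)
  have hFi2 := hFi.mono_set (c := 0) (d := b) (by
    rw [Set.uIcc_of_le hab, Set.uIcc_of_le hb.le]; exact Set.Icc_subset_Icc_left (by linarith))
  have e2 : (∫ s in (0 : ℝ)..b, φ (b - s) / (1 - z * ((b - s : ℝ) : ℂ)) *
      ((b - s : ℝ) : ℂ) ^ (n + 1)) = ∫ t in (0 : ℝ)..b, φ t / (1 - z * t) * (t : ℂ) ^ (n + 1) := by
    have := intervalIntegral.integral_comp_sub_left (a := 0) (b := b)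
      (fun t : ℝ => φ t / (1 - z * t) * (t : ℂ) ^ (n + 1)) b
    simpa only [sub_self, sub_zero] using this
  have e1 : (∫ s in (0 : ℝ)..a, φ (s - a) / (1 - -z * ((a - s : ℝ) : ℂ)) *
      ((a - s : ℝ) : ℂ) ^ (n + 1)) =
      (-1) ^ (n + 1) * ∫ t in (-a)..0, φ t / (1 - z * t) * (t : ℂ) ^ (n + 1) := by
    have := intervalIntegral.integral_comp_sub_right (a := 0) (b := a)
      (fun t : ℝ => φ t / (1 - z * t) * (t : ℂ) ^ (n + 1)) a
    rw [sub_self, zero_sub] at this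
    rw [← this, ← intervalIntegral.integral_const_mul]
    apply intervalIntegral.integral_congr
    intro s _
    have e3 : ((a - s : ℝ) : ℂ) = (-1) * ((s - a : ℝ) : ℂ) := by push_cast; ring
    simp only [e3, mul_pow]
    have e4 : 1 - -z * (-1 * ((s - a : ℝ) : ℂ)) = 1 - z * ((s - a : ℝ) : ℂ) := by ring
    rw [e4]; ring
  rw [e2] at h2
  rw [e1] at h1
  have hsq : ((-1 : ℂ) ^ (n + 1)) * (-1) ^ (n + 1) = 1 := by
    rw [← mul_pow]; simp
  have hden : (1 - (a : ℂ) * -z) = 1 + a * z := by ring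
  rw [hden] at h1
  rw [← intervalIntegral.integral_add_adjacent_intervals hFi1 hFi2]
  set I₁ := ∫ t in (-a)..0, φ t / (1 - z * t) * (t : ℂ) ^ (n + 1)
  set I₂ := ∫ t in (0 : ℝ)..b, φ t / (1 - z * t) * (t : ℂ) ^ (n + 1)
  have key : I₁ + I₂ - ((-1) ^ (n + 1) * f₁ 0 * Complex.Gamma (μ + 1) / (1 + a * z) *
              (n : ℂ) ^ (-μ - 1) * (a : ℂ) ^ ((n : ℂ) + μ + 2) +
            f₂ 0 * Complex.Gamma (ν + 1) / (1 - b * z) *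
              (n : ℂ) ^ (-ν - 1) * (b : ℂ) ^ ((n : ℂ) + ν + 2)) =
      (-1) ^ (n + 1) * ((-1) ^ (n + 1) * I₁ - f₁ 0 * Complex.Gamma (μ + 1) / (1 + a * z) *
              (n : ℂ) ^ (-μ - 1) * (a : ℂ) ^ ((n : ℂ) + μ + 2)) +
      (I₂ - f₂ 0 * Complex.Gamma (ν + 1) / (1 - b * z) *
              (n : ℂ) ^ (-ν - 1) * (b : ℂ) ^ ((n : ℂ) + ν + 2)) := by
    linear_combination (-I₁) * hsq
  rw [key]
  refine (norm_add_le _ _).trans ?_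
  rw [norm_mul, norm_pow, norm_neg, norm_one, one_pow, one_mul]
  have p1 : 0 ≤ ‖((n : ℂ) ^ (-μ - 2))‖ * a ^ n := by positivity
  have p2 : 0 ≤ ‖((n : ℂ) ^ (-ν - 2))‖ * b ^ n := by positivity
  nlinarith [mul_nonneg hC₁ p2, mul_nonneg hC₂ p1]
end
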